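/- arXiv:1612.01694 — 3 statements merged into one kernel-verified Lean document; each statement's English description precedes it below -/
import Mathlib

section
/- Let k ≥ 1 and h ≥ 2 be positive integers and let G = (U,V,E) be a bipartite graph. Suppose that for every subset S of U, |Γ(S)| ≥ (h - 1 + 1/⌈k/h⌉)·|S|. Then G has an (h, hk)-matching. -/
open scoped Classical

noncomputable section

variable {U V : Type*}

/-- The neighbourhood `Γ(S) ⊆ V` of a set `S` of left vertices of the bipartite
graph with edge set `E ⊆ U × V`. -/
def nbhd (E : Finset (U × V)) (S : Finset U) : Finset V :=
  (E.filter fun p => p.1 ∈ S).image Prod.snd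

/-- The neighbourhood `Γ(T) ⊆ U` of a set `T` of right vertices. -/
def nbhdR (E : Finset (U × V)) (T : Finset V) : Finset U :=
  (E.filter fun p => p.2 ∈ T).image Prod.fst

/-- The degree of a left vertex `u` in the bipartite graph with edge set `E`. -/
def degL (E : Finset (U × V)) (u : U) : ℕ := (E.filter fun p => p.1 = u).card

/-- The degree of a right vertex `v` in the bipartite graph with edge set `E`. -/
def degR (E : Finset (U × V)) (v : V) : ℕ := (E.filter fun p => p.2 = v).card

/-- The bipartite graph on the vertex set `U ⊕ V` determined by an edge set
`F ⊆ U × V`. -/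
def mkGraph (F : Finset (U × V)) : SimpleGraph (U ⊕ V) :=
  SimpleGraph.fromRel fun x y => ∃ p ∈ F, x = Sum.inl p.1 ∧ y = Sum.inr p.2

/-- The edges of `F` lying inside the connected component `c` of `mkGraph F`. -/
def componentEdges (F : Finset (U × V)) (c : (mkGraph F).ConnectedComponent) :
    Finset (U × V) :=
  F.filter fun p => (mkGraph F).connectedComponentMk (Sum.inl p.1) = c

/-- An `(s,t)`-matching in the bipartite graph `G = (U,V,E)`: a subset `F ⊆ E` such
that in `H = (U,V,F)` every connected component is a tree (i.e. `H` is acyclic) with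
at most `t` edges, and every vertex `u ∈ U` has degree exactly `s` in `H`. -/
def IsSTMatching (s t : ℕ) (E F : Finset (U × V)) : Prop :=
  F ⊆ E ∧ (mkGraph F).IsAcyclic ∧
    (∀ c : (mkGraph F).ConnectedComponent, (componentEdges F c).card ≤ t) ∧
    ∀ u : U, degL F u = s

theorem mkGraph_adj_lr (F : Finset (U × V)) (u : U) (v : V) :
    (mkGraph F).Adj (Sum.inl u) (Sum.inr v) ↔ (u, v) ∈ F := by
  simp [mkGraph]

theorem mkGraph_adj_ll (F : Finset (U × V)) (u u' : U) :
    ¬ (mkGraph F).Adj (Sum.inl u) (Sum.inl u') := by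
  simp [mkGraph]

theorem mkGraph_adj_rr (F : Finset (U × V)) (v v' : V) :
    ¬ (mkGraph F).Adj (Sum.inr v) (Sum.inr v') := by
  simp [mkGraph]

theorem mkGraph_mono {F F' : Finset (U × V)} (h : F ⊆ F') : mkGraph F ≤ mkGraph F' := by
  intro x y hxy
  rcases x with u | v <;> rcases y with u' | v'
  · exact absurd hxy (mkGraph_adj_ll _ _ _)
  · rw [mkGraph_adj_lr] at *; exact h hxy
  · have := hxy.symm
    apply SimpleGraph.Adj.symm
    rw [mkGraph_adj_lr] at *; exact h this
  · exact absurd hxy (mkGraph_adj_rr _ _ _)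

theorem comp_eq {F : Finset (U × V)} {p : U × V} (h : p ∈ F) :
    (mkGraph F).connectedComponentMk (Sum.inl p.1) =
      (mkGraph F).connectedComponentMk (Sum.inr p.2) :=
  SimpleGraph.ConnectedComponent.sound ((mkGraph_adj_lr F p.1 p.2).2 h).reachable

/-- a vertex labelling constant on edges is constant on components -/
theorem label_const {F : Finset (U × V)} {β : Type*} (l : U ⊕ V → β)
    (h : ∀ p ∈ F, l (Sum.inl p.1) = l (Sum.inr p.2)) {x y : U ⊕ V}
    (hxy : (mkGraph F).connectedComponentMk x = (mkGraph F).connectedComponentMk y) :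
    l x = l y := by
  obtain ⟨w⟩ := SimpleGraph.ConnectedComponent.exact hxy
  clear hxy
  induction w with
  | nil => rfl
  | @cons a b c hab w ih =>
    rw [← ih]
    rcases a with u | v <;> rcases b with u' | v'
    · exact absurd hab (mkGraph_adj_ll _ _ _)
    · exact h (u, v') ((mkGraph_adj_lr _ _ _).1 hab)
    · exact (h (u', v) ((mkGraph_adj_lr _ _ _).1 hab.symm)).symm
    · exact absurd hab (mkGraph_adj_rr _ _ _)

/-- Hall with multiplicities -/
theorem hall_mult {I W : Type*} (a b : ℕ) (N : I → Finset W)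
    (h : ∀ S : Finset I, a * S.card ≤ b * (S.biUnion N).card) :
    ∃ φ : I × Fin a → W × Fin b, Function.Injective φ ∧ ∀ x, (φ x).1 ∈ N x.1 := by
  have := (Finset.all_card_le_biUnion_card_iff_exists_injective
    (fun x : I × Fin a => N x.1 ×ˢ (Finset.univ : Finset (Fin b)))).1 ?_
  · obtain ⟨φ, h1, h2⟩ := this
    exact ⟨φ, h1, fun x => (Finset.mem_product.1 (h2 x)).1⟩
  · intro s
    have e : (s.biUnion fun x : I × Fin a => N x.1 ×ˢ (Finset.univ : Finset (Fin b)))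
        = ((s.image Prod.fst).biUnion N) ×ˢ (Finset.univ : Finset (Fin b)) := by
      ext ⟨w, j⟩
      simp
    rw [e, Finset.card_product, Finset.card_univ, Fintype.card_fin]
    have h1 : s.card ≤ ((s.image Prod.fst) ×ˢ (Finset.univ : Finset (Fin a))).card := by
      apply Finset.card_le_card
      intro x hx
      simp only [Finset.mem_product, Finset.mem_univ, and_true]
      exact Finset.mem_image_of_mem _ hx
    rw [Finset.card_product, Finset.card_univ, Fintype.card_fin] at h1
    have := h (s.image Prod.fst)
    linarith [mul_comm a (s.image Prod.fst).card, mul_comm b ((s.image Prod.fst).biUnion N).card]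

/-- signed contribution of a step -/
def dd (x z : U ⊕ V) (p : U × V) : ℤ :=
  (if x = Sum.inl p.1 ∧ z = Sum.inr p.2 then 1 else 0) -
    (if x = Sum.inr p.2 ∧ z = Sum.inl p.1 then 1 else 0)

/-- signed edge count of a walk -/
def wflow {G : SimpleGraph (U ⊕ V)} : {x y : U ⊕ V} → G.Walk x y → U × V → ℤ
  | _, _, .nil, _ => 0
  | x, _, .cons (v := z) _ w, p => dd x z p + wflow w p

theorem wflow_row [Fintype V] {F : Finset (U × V)} {x y : U ⊕ V} (w : (mkGraph F).Walk x y)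
    (u : U) : ∑ v, wflow w (u, v) =
      (if x = Sum.inl u then 1 else 0) - (if y = Sum.inl u then 1 else 0) := by
  induction w with
  | nil => simp [wflow]
  | @cons a b c hab w ih =>
    simp only [wflow, Finset.sum_add_distrib, ih]
    have : ∑ v, dd a b (u, v) =
      (if a = Sum.inl u then 1 else 0) - (if b = Sum.inl u then 1 else 0) := by
      rcases a with u1 | v1 <;> rcases b with u2 | v2
      · exact absurd hab (mkGraph_adj_ll _ _ _)
      · by_cases h : u1 = u <;> simp [dd, h]
      · by_cases h : u2 = u <;> simp [dd, h]
      · exact absurd hab (mkGraph_adj_rr _ _ _)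
    rw [this]; ring

theorem wflow_col [Fintype U] {F : Finset (U × V)} {x y : U ⊕ V} (w : (mkGraph F).Walk x y)
    (v : V) : ∑ u, wflow w (u, v) =
      (if y = Sum.inr v then 1 else 0) - (if x = Sum.inr v then 1 else 0) := by
  induction w with
  | nil => simp [wflow]
  | @cons a b c hab w ih =>
    simp only [wflow, Finset.sum_add_distrib, ih]
    have : ∑ u, dd a b (u, v) =
      (if b = Sum.inr v then 1 else 0) - (if a = Sum.inr v then 1 else 0) := by
      rcases a with u1 | v1 <;> rcases b with u2 | v2
      · exact absurd hab (mkGraph_adj_ll _ _ _)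
      · by_cases h : v2 = v <;> simp [dd, h]
      · by_cases h : v1 = v <;> simp [dd, h]
      · exact absurd hab (mkGraph_adj_rr _ _ _)
    rw [this]; ring

theorem dd_zero {x z : U ⊕ V} {p : U × V} (h : s(Sum.inl p.1, Sum.inr p.2) ≠ s(x, z)) :
    dd x z p = 0 := by
  unfold dd
  rw [if_neg, if_neg]; · rfl
  · rintro ⟨rfl, rfl⟩; exact h Sym2.eq_swap
  · rintro ⟨rfl, rfl⟩; exact h rfl

theorem dd_one {x z : U ⊕ V} {p : U × V} (h : s(Sum.inl p.1, Sum.inr p.2) = s(x, z)) :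
    dd x z p = 1 ∨ dd x z p = -1 := by
  rcases Sym2.eq_iff.1 h with ⟨rfl, rfl⟩ | ⟨rfl, rfl⟩ <;> simp [dd]

theorem wflow_zero {G : SimpleGraph (U ⊕ V)} {x y : U ⊕ V} (w : G.Walk x y) (p : U × V)
    (h : s(Sum.inl p.1, Sum.inr p.2) ∉ w.edges) : wflow w p = 0 := by
  induction w with
  | nil => rfl
  | @cons a b c hab w ih =>
    simp only [SimpleGraph.Walk.edges_cons, List.mem_cons, not_or] at h
    simp [wflow, ih h.2, dd_zero h.1]

theorem wflow_one {G : SimpleGraph (U ⊕ V)} {x y : U ⊕ V} (w : G.Walk x y) (p : U × V)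
    (hn : w.edges.Nodup)
    (h : s(Sum.inl p.1, Sum.inr p.2) ∈ w.edges) : wflow w p = 1 ∨ wflow w p = -1 := by
  induction w with
  | nil => simp at h
  | @cons a b c hab w ih =>
    simp only [SimpleGraph.Walk.edges_cons, List.mem_cons, List.nodup_cons] at h hn
    by_cases he : s(Sum.inl p.1, Sum.inr p.2) = s(a, b)
    · rw [wflow, wflow_zero w p (by rw [he]; exact hn.1), add_zero]
      exact dd_one he
    · rw [wflow, dd_zero he, zero_add]
      exact ih hn.2 (h.resolve_left he)

/-- feasible flows -/
def Feas [Fintype U] [Fintype V] (a b : ℕ) (E : Finset (U × V)) (f : U × V → ℤ) : Prop :=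
  (∀ p, 0 ≤ f p) ∧ (∀ p, p ∉ E → f p = 0) ∧ (∀ u, ∑ v, f (u, v) = a) ∧
    (∀ v, ∑ u, f (u, v) ≤ b)

theorem exists_feas [Fintype U] [Fintype V] (a b : ℕ) (E : Finset (U × V))
    (h : ∀ S : Finset U, a * S.card ≤ b * (nbhd E S).card) : ∃ f, Feas a b E f := by
  obtain ⟨φ, hi, hm⟩ := hall_mult (I := U) (W := V) a b (fun u => nbhd E {u}) (by
    intro S
    convert h S using 3
    ext v
    simp [nbhd, and_comm])
  refine ⟨fun p => ((Finset.univ.filter fun i : Fin a => (φ (p.1, i)).1 = p.2).card : ℤ),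
    fun p => by positivity, ?_, ?_, ?_⟩
  · intro p hp
    simp only [Nat.cast_eq_zero, Finset.card_eq_zero, Finset.filter_eq_empty_iff]
    intro i _ hi
    have := hm (p.1, i)
    rw [hi] at this
    simp [nbhd] at this
    exact hp this
  · intro u
    have := Finset.card_eq_sum_card_fiberwise (s := (Finset.univ : Finset (Fin a)))
      (t := (Finset.univ : Finset V)) (f := fun i => (φ (u, i)).1) (fun _ _ => Finset.mem_univ _)
    rw [Finset.card_univ, Fintype.card_fin] at this
    dsimp only
    exact_mod_cast this.symm
  · intro v
    have h1 : ∑ u : U, (Finset.univ.filter fun i : Fin a => (φ (u, i)).1 = v).card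
        = ((Finset.univ : Finset U).sigma
          fun u => (Finset.univ.filter fun i : Fin a => (φ (u, i)).1 = v)).card := by
      rw [Finset.card_sigma]
    have h2 : ((Finset.univ : Finset U).sigma
          fun u => (Finset.univ.filter fun i : Fin a => (φ (u, i)).1 = v)).card
          ≤ (Finset.univ : Finset (Fin b)).card := by
      apply Finset.card_le_card_of_injOn (fun x => (φ (x.1, x.2)).2)
        (fun _ _ => Finset.mem_univ _)
      rintro ⟨u, i⟩ hx ⟨u', i'⟩ hy hxy
      simp at hx hy hxy
      have := hi (Prod.ext (hx.trans hy.symm) hxy)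
      simp at this
      rw [this.1, this.2]
    rw [Finset.card_univ, Fintype.card_fin] at h2
    dsimp only
    exact_mod_cast h1 ▸ h2

theorem exists_feas_acyclic [Fintype U] [Fintype V] (a b : ℕ) (E : Finset (U × V))
    (h : ∃ f, Feas a b E f) :
    ∃ f, Feas a b E f ∧ (mkGraph (Finset.univ.filter fun p => f p ≠ 0)).IsAcyclic := by
  have hfin : {f | Feas a b E f}.Finite := by
    apply (Set.finite_Icc (0 : U × V → ℤ) (fun _ => (b : ℤ))).subset
    intro f hf
    refine ⟨hf.1, fun p => ?_⟩
    exact (Finset.single_le_sum (f := fun u => f (u, p.2)) (fun u _ => hf.1 _)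
      (Finset.mem_univ p.1)).trans (hf.2.2.2 p.2)
  obtain ⟨f, hf, hmax⟩ := Set.exists_max_image _ (fun f => ∑ p, f p ^ 2) hfin h
  refine ⟨f, hf, ?_⟩
  intro x w hw
  have hnd := hw.edges_nodup
  have hsupp : ∀ p, wflow w p ≠ 0 → f p ≠ 0 := by
    intro p hp
    by_contra hfp
    apply hp
    apply wflow_zero
    intro hmem
    have := w.edges_subset_edgeSet hmem
    rw [SimpleGraph.mem_edgeSet, mkGraph_adj_lr] at this
    simp [hfp] at this
  have hval : ∀ p, wflow w p = 0 ∨ wflow w p = 1 ∨ wflow w p = -1 := by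
    intro p
    by_cases hmem : s(Sum.inl p.1, Sum.inr p.2) ∈ w.edges
    · exact Or.inr (wflow_one w p hnd hmem)
    · exact Or.inl (wflow_zero w p hmem)
  have hne : ∃ p, wflow w p ≠ 0 := by
    cases w with
    | nil => simp at hw
    | @cons _ z _ hab w =>
      have : ∃ p : U × V, s(Sum.inl p.1, Sum.inr p.2) = s(x, z) := by
        rcases x with u | v <;> rcases z with u' | v'
        · exact absurd hab (mkGraph_adj_ll _ _ _)
        · exact ⟨(u, v'), rfl⟩
        · exact ⟨(u', v), Sym2.eq_swap⟩
        · exact absurd hab (mkGraph_adj_rr _ _ _)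
      obtain ⟨p, hp⟩ := this
      refine ⟨p, ?_⟩
      rcases wflow_one _ p hnd (by rw [hp]; simp) with h | h <;> rw [h] <;> simp
  have hfe : ∀ ε : ℤ, ε = 1 ∨ ε = -1 → Feas a b E (fun p => f p + ε * wflow w p) := by
    intro ε hε
    refine ⟨fun p => ?_, fun p hp => ?_, fun u => ?_, fun v => ?_⟩
    · by_cases h0 : wflow w p = 0
      · simp [h0, hf.1 p]
      · have h1 := hsupp p h0
        have h2 := hf.1 p
        rcases hval p with h3 | h3 | h3 <;> rcases hε with rfl | rfl <;> simp only [h3] <;> omega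
    · have := hf.2.1 p hp
      have h0 : wflow w p = 0 := by
        by_contra h0
        exact hsupp p h0 this
      simp [this, h0]
    · rw [Finset.sum_add_distrib, ← Finset.mul_sum, wflow_row, hf.2.2.1]; simp
    · rw [Finset.sum_add_distrib, ← Finset.mul_sum, wflow_col]
      simpa using hf.2.2.2 v
  have h1 := hmax _ (hfe 1 (Or.inl rfl))
  have h2 := hmax _ (hfe (-1) (Or.inr rfl))
  have h3 : 0 < ∑ p, wflow w p ^ 2 := by
    obtain ⟨p, hp⟩ := hne
    exact Finset.sum_pos' (fun _ _ => sq_nonneg _) ⟨p, Finset.mem_univ _, by positivity⟩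
  have h4 : ∑ p, (f p + 1 * wflow w p) ^ 2 + ∑ p, (f p + -1 * wflow w p) ^ 2
      = 2 * ∑ p, f p ^ 2 + 2 * ∑ p, wflow w p ^ 2 := by
    rw [Finset.mul_sum, Finset.mul_sum, ← Finset.sum_add_distrib, ← Finset.sum_add_distrib]
    exact Finset.sum_congr rfl fun p _ => by ring
  linarith

theorem acyclic_edges {W : Type*} [Fintype W] (G : SimpleGraph W) (hG : G.IsAcyclic) :
    G.edgeFinset.card ≤ Fintype.card W := by
  rcases isEmpty_or_nonempty W with hW | hW
  · have : G.edgeFinset = ∅ := by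
      ext e
      induction e using Sym2.ind with
      | _ x y => exact hW.elim x
    simp [this]
  · obtain ⟨T, hle, -, hT⟩ := (SimpleGraph.connected_top (V := W)).exists_isTree_le_of_le_of_isAcyclic
      (le_top : G ≤ ⊤) hG
    rw [← hT.card_edgeFinset]
    exact (Finset.card_le_card (SimpleGraph.edgeFinset_mono hle)).trans (Nat.le_succ _)

theorem forest_count [Fintype U] [Fintype V] {A : Finset (U × V)} (hA : (mkGraph A).IsAcyclic)
    (T : Finset U) (N : Finset V) (hN : ∀ p ∈ A, p.1 ∈ T → p.2 ∈ N) :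
    (A.filter fun p => p.1 ∈ T).card ≤ T.card + N.card := by
  let ι : T ⊕ N ↪ U ⊕ V := (Function.Embedding.subtype _).sumMap (Function.Embedding.subtype _)
  have h1 := acyclic_edges _ (hA.of_comap ι)
  rw [Fintype.card_sum, Fintype.card_coe, Fintype.card_coe] at h1
  refine le_trans ?_ h1
  rw [← Finset.card_attach]
  apply Finset.card_le_card_of_injOn (fun p =>
    s(Sum.inl ⟨p.1.1, (Finset.mem_filter.1 p.2).2⟩, Sum.inr ⟨p.1.2,
      hN _ (Finset.mem_filter.1 p.2).1 (Finset.mem_filter.1 p.2).2⟩))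
  · intro p _
    simp only [Finset.mem_coe, SimpleGraph.mem_edgeFinset, SimpleGraph.mem_edgeSet]
    exact (mkGraph_adj_lr A _ _).2 (Finset.mem_filter.1 p.2).1
  · rintro ⟨p, hp⟩ _ ⟨q, hq⟩ _ hpq
    simp at hpq
    exact Subtype.ext (Prod.ext hpq.1 hpq.2)

/-- left vertices of a component -/
def cU [Fintype U] (F : Finset (U × V)) (c : (mkGraph F).ConnectedComponent) : Finset U :=
  Finset.univ.filter fun u => (mkGraph F).connectedComponentMk (Sum.inl u) = c

/-- right vertices of a component -/
def cV [Fintype V] (F : Finset (U × V)) (c : (mkGraph F).ConnectedComponent) : Finset V :=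
  Finset.univ.filter fun v => (mkGraph F).connectedComponentMk (Sum.inr v) = c

theorem comp_count [Fintype U] [Fintype V] (F : Finset (U × V))
    (c : (mkGraph F).ConnectedComponent) :
    (cU F c).card + (cV F c).card ≤ (componentEdges F c).card + 1 := by
  have h1 := c.connected_toSimpleGraph.card_vert_le_card_edgeSet_add_one
  have h2 : Nat.card c = (cU F c).card + (cV F c).card := by
    rw [← Finset.card_disjSum, ← Set.ncard_coe_finset]
    change Set.ncard c.supp = _
    congr 1
    ext x
    rcases x with u | v <;> simp [cU, cV]
  rw [← h2]
  refine h1.trans (Nat.add_le_add_right ?_ 1)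
  rw [← Fintype.card_coe, ← Nat.card_eq_fintype_card]
  let g : componentEdges F c → c.toSimpleGraph.edgeSet := fun p =>
    have hp := Finset.mem_filter.1 p.2
    ⟨s(⟨Sum.inl p.1.1, hp.2⟩, ⟨Sum.inr p.1.2, (comp_eq hp.1).symm.trans hp.2⟩),
      (mkGraph_adj_lr _ _ _).2 hp.1⟩
  apply Nat.card_le_card_of_surjective g
  rintro ⟨e, he⟩
  induction e using Sym2.ind with
  | _ x y =>
    obtain ⟨x, hx⟩ := x
    obtain ⟨y, hy⟩ := y
    have had : (mkGraph F).Adj x y := he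
    rcases x with u | v <;> rcases y with u' | v'
    · exact absurd had (mkGraph_adj_ll _ _ _)
    · exact ⟨⟨(u, v'), Finset.mem_filter.2 ⟨(mkGraph_adj_lr _ _ _).1 had, hx⟩⟩, rfl⟩
    · exact ⟨⟨(u', v), Finset.mem_filter.2 ⟨(mkGraph_adj_lr _ _ _).1 had.symm, hy⟩⟩,
        Subtype.ext Sym2.eq_swap⟩
    · exact absurd had (mkGraph_adj_rr _ _ _)

theorem sum_degL (F : Finset (U × V)) (T : Finset U) :
    (F.filter fun p => p.1 ∈ T).card = ∑ u ∈ T, degL F u := by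
  rw [Finset.card_eq_sum_card_fiberwise (s := F.filter fun p => p.1 ∈ T) (f := Prod.fst) (t := T)
    (fun p hp => (Finset.mem_filter.1 hp).2)]
  refine Finset.sum_congr rfl fun u hu => ?_
  unfold degL
  congr 1
  ext p
  simp only [Finset.mem_filter]
  constructor
  · rintro ⟨⟨h1, -⟩, h2⟩; exact ⟨h1, h2⟩
  · rintro ⟨h1, h2⟩; exact ⟨⟨h1, h2 ▸ hu⟩, h2⟩

theorem componentEdges_eq [Fintype U] (F : Finset (U × V)) (c : (mkGraph F).ConnectedComponent) :
    componentEdges F c = F.filter fun p => p.1 ∈ cU F c := by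
  ext p; simp [componentEdges, cU]

theorem row_le [Fintype V] {f : U × V → ℤ} {F : Finset (U × V)} (u : U)
    (hF : ∀ v, f (u, v) ≠ 0 → (u, v) ∈ F) :
    ∑ p ∈ F.filter (fun p => p.1 = u), f p = ∑ v, f (u, v) := by
  have h1 : F.filter (fun p => p.1 = u) =
      (Finset.univ.filter fun v => (u, v) ∈ F).image (fun v => (u, v)) := by
    ext ⟨u', v⟩
    simp only [Finset.mem_filter, Finset.mem_image, Finset.mem_univ, true_and, Prod.mk.injEq]
    constructor
    · rintro ⟨h, rfl⟩; exact ⟨v, h, rfl, rfl⟩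
    · rintro ⟨w, h, rfl, rfl⟩; exact ⟨h, rfl⟩
  rw [h1, Finset.sum_image (by intro x _ y _ h; simpa using h)]
  apply Finset.sum_subset (Finset.subset_univ _)
  intro v _ hv
  by_contra h
  exact hv (by simpa using hF v h)

theorem core [Fintype U] [Fintype V] (k g m : ℕ) (hm : 1 ≤ m) (hk : m * (g + 1) + 1 ≤ k + (g + 1))
    (E : Finset (U × V))
    (hN : ∀ S : Finset U, (m * g + 1) * S.card ≤ m * (nbhd E S).card) :
    ∃ F : Finset (U × V), IsSTMatching (g + 1) ((g + 1) * k) E F := by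
  obtain ⟨f, ⟨hf0, hfE, hfr, hfc⟩, hac⟩ := exists_feas_acyclic _ _ E (exists_feas _ _ E hN)
  set A : Finset (U × V) := Finset.univ.filter fun p => f p ≠ 0 with hA
  have memA : ∀ p, p ∈ A ↔ f p ≠ 0 := fun p => by simp [hA]
  have hAE : A ⊆ E := by
    intro p hp
    by_contra h
    exact (memA p).1 hp (hfE p h)
  have hfm : ∀ p, f p ≤ m := fun p =>
    (Finset.single_le_sum (f := fun u => f (u, p.2)) (fun u _ => hf0 _)
      (Finset.mem_univ p.1)).trans (hfc p.2)
  have hdeg : ∀ u, g + 1 ≤ degL A u := by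
    intro u
    have h1 := row_le (f := f) (F := A) u (fun v hv => (memA _).2 hv)
    have h2 : ∑ p ∈ A.filter (fun p => p.1 = u), f p ≤ degL A u * (m : ℤ) := by
      have := Finset.sum_le_card_nsmul (A.filter (fun p => p.1 = u)) f (m : ℤ) (fun p _ => hfm p)
      simpa [degL] using this
    rw [h1, hfr] at h2
    by_contra hlt
    have h3 : degL A u ≤ g := by omega
    have h4 : m * g + 1 ≤ degL A u * m := by exact_mod_cast h2
    nlinarith
  let tight : U → Prop := fun u => degL A u = g + 1
  set D : Finset (U × V) := A.filter fun p => tight p.1 with hD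
  have memD : ∀ p, p ∈ D ↔ p ∈ A ∧ tight p.1 := fun p => by simp [hD]
  have degD : ∀ u, tight u → degL D u = g + 1 := by
    intro u hu
    rw [← show degL A u = g + 1 from hu]
    unfold degL
    congr 1
    ext p
    simp only [Finset.mem_filter, memD]
    constructor
    · rintro ⟨⟨h1, -⟩, h2⟩; exact ⟨h1, h2⟩
    · rintro ⟨h1, h2⟩; exact ⟨⟨h1, h2 ▸ hu⟩, h2⟩
  have degD0 : ∀ u, ¬ tight u → degL D u = 0 := by
    intro u hu
    unfold degL
    rw [Finset.card_eq_zero, Finset.filter_eq_empty_iff]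
    rintro p hp rfl
    exact hu ((memD p).1 hp).2
  let cc : U ⊕ V → (mkGraph D).ConnectedComponent := (mkGraph D).connectedComponentMk
  -- second application of Hall
  obtain ⟨φ, φinj, φmem⟩ := hall_mult (I := {u // ¬ tight u})
    (W := (mkGraph D).ConnectedComponent) (g + 1) 1
    (fun u => (Finset.univ.filter fun v => (u.1, v) ∈ A).image fun v => cc (Sum.inr v)) (by
    intro S
    set Q := S.biUnion
      (fun u => (Finset.univ.filter fun v => (u.1, v) ∈ A).image fun v => cc (Sum.inr v)) with hQ
    let S' : Finset U := S.map (Function.Embedding.subtype _)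
    let T' : Finset U := Finset.univ.filter fun u => tight u ∧ cc (Sum.inl u) ∈ Q
    let VN : Finset V := Finset.univ.filter fun v => cc (Sum.inr v) ∈ Q
    have hS' : ∀ u ∈ S', ¬ tight u := by
      intro u hu
      obtain ⟨x, -, rfl⟩ := Finset.mem_map.1 hu
      exact x.2
    have hdis : Disjoint S' T' := by
      rw [Finset.disjoint_left]
      intro u hu hu'
      exact hS' u hu (Finset.mem_filter.1 hu').2.1
    have h1 := forest_count hac (S' ∪ T') VN (by
      intro p hp hpT
      refine Finset.mem_filter.2 ⟨Finset.mem_univ _, ?_⟩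
      rcases Finset.mem_union.1 hpT with h | h
      · obtain ⟨x, hx, hxp⟩ := Finset.mem_map.1 h
        refine Finset.mem_biUnion.2 ⟨x, hx, Finset.mem_image.2 ⟨p.2, ?_, rfl⟩⟩
        refine Finset.mem_filter.2 ⟨Finset.mem_univ _, ?_⟩
        have : x.1 = p.1 := hxp
        rw [this]; exact hp
      · have h2 := (Finset.mem_filter.1 h).2
        have h3 := comp_eq ((memD p).2 ⟨hp, h2.1⟩)
        have h4 : cc (Sum.inl p.1) = cc (Sum.inr p.2) := h3
        rw [← h4]; exact h2.2)
    rw [sum_degL, Finset.sum_union hdis, Finset.card_union_of_disjoint hdis] at h1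
    have h2 : S'.card * (g + 2) ≤ ∑ u ∈ S', degL A u := by
      have := Finset.card_nsmul_le_sum S' (degL A) (g + 2) (by
        intro u hu
        have h3 := hdeg u
        have h4 : degL A u ≠ g + 1 := hS' u hu
        omega)
      simpa using this
    have h3 : T'.card * (g + 1) ≤ ∑ u ∈ T', degL A u := by
      have := Finset.card_nsmul_le_sum T' (degL A) (g + 1) (fun u _ => hdeg u)
      simpa using this
    have h4 : T'.card = ∑ c ∈ Q, ((cU D c).filter tight).card := by
      rw [Finset.card_eq_sum_card_fiberwise (s := T') (f := fun u => cc (Sum.inl u)) (t := Q)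
        (fun u hu => (Finset.mem_filter.1 hu).2.2)]
      refine Finset.sum_congr rfl fun c hc => ?_
      congr 1
      ext u
      simp only [T', cU, Finset.mem_filter, Finset.mem_univ, true_and]
      constructor
      · rintro ⟨⟨h1, -⟩, h2⟩; exact ⟨h2, h1⟩
      · rintro ⟨h1, h2⟩
        have h1' : cc (Sum.inl u) = c := h1
        exact ⟨⟨h2, h1' ▸ hc⟩, h1⟩
    have h5 : VN.card = ∑ c ∈ Q, (cV D c).card := by
      rw [Finset.card_eq_sum_card_fiberwise (s := VN) (f := fun v => cc (Sum.inr v)) (t := Q)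
        (fun u hu => (Finset.mem_filter.1 hu).2)]
      refine Finset.sum_congr rfl fun c hc => ?_
      congr 1
      ext u
      simp only [VN, cV, Finset.mem_filter, Finset.mem_univ, true_and]
      constructor
      · rintro ⟨-, h2⟩; exact h2
      · intro h1
        have h1' : cc (Sum.inr u) = c := h1
        exact ⟨h1' ▸ hc, h1⟩
    have h6 : ∀ c ∈ Q, ((cU D c).filter tight).card + (cV D c).card
        ≤ (g + 1) * ((cU D c).filter tight).card + 1 := by
      intro c _
      have h7 := comp_count D c
      have h8 : (componentEdges D c).card = (g + 1) * ((cU D c).filter tight).card := by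
        rw [componentEdges_eq, sum_degL, ← Finset.sum_filter_add_sum_filter_not (cU D c) tight,
          Finset.sum_congr rfl (fun u hu => degD u (Finset.mem_filter.1 hu).2),
          Finset.sum_congr rfl (fun u hu => degD0 u (Finset.mem_filter.1 hu).2)]
        simp [mul_comm]
      have h9 : ((cU D c).filter tight).card ≤ (cU D c).card :=
        Finset.card_le_card (Finset.filter_subset _ _)
      omega
    have h7 := Finset.sum_le_sum h6
    rw [Finset.sum_add_distrib, Finset.sum_add_distrib, ← Finset.mul_sum, ← h4, ← h5,
      Finset.sum_const, smul_eq_mul, mul_one] at h7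
    have h8 : S'.card = S.card := Finset.card_map _
    rw [one_mul, ← h8]
    nlinarith)
  have hv : ∀ x : {u // ¬ tight u} × Fin (g + 1), ∃ v, (x.1.1, v) ∈ A ∧ cc (Sum.inr v) = (φ x).1 := by
    intro x
    obtain ⟨v, hv, hv'⟩ := Finset.mem_image.1 (φmem x)
    exact ⟨v, (Finset.mem_filter.1 hv).2, hv'⟩
  choose vv hvA hvc using hv
  have φinj' : ∀ x y, (φ x).1 = (φ y).1 → x = y := by
    intro x y h
    exact φinj (Prod.ext h (Subsingleton.elim _ _))
  let F : Finset (U × V) := D ∪ Finset.univ.image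
    (fun x : {u // ¬ tight u} × Fin (g + 1) => (x.1.1, vv x))
  have memF : ∀ p, p ∈ F ↔ p ∈ D ∨ ∃ x : {u // ¬ tight u} × Fin (g + 1), (x.1.1, vv x) = p := by
    intro p; simp only [F, Finset.mem_union, Finset.mem_image, Finset.mem_univ, true_and]
  have hFA : F ⊆ A := by
    intro p hp
    rcases (memF p).1 hp with h | ⟨x, rfl⟩
    · exact ((memD p).1 h).1
    · exact hvA x
  have tightF : ∀ u, tight u → ∀ v, f (u, v) ≠ 0 → (u, v) ∈ F := by
    intro u hu v hv
    exact (memF _).2 (Or.inl ((memD _).2 ⟨(memA _).2 hv, hu⟩))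
  have degF : ∀ u, degL F u = g + 1 := by
    intro u
    by_cases hu : tight u
    · rw [← show degL A u = g + 1 from hu]
      unfold degL
      congr 1
      ext p
      simp only [Finset.mem_filter]
      constructor
      · rintro ⟨h1, h2⟩; exact ⟨hFA h1, h2⟩
      · rintro ⟨h1, rfl⟩; exact ⟨tightF _ hu _ ((memA _).1 h1), rfl⟩
    · have : F.filter (fun p => p.1 = u) =
          Finset.univ.image (fun i : Fin (g + 1) => (u, vv (⟨u, hu⟩, i))) := by
        ext p
        simp only [Finset.mem_filter, memF, Finset.mem_image, Finset.mem_univ, true_and]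
        constructor
        · rintro ⟨h | ⟨⟨x, i⟩, rfl⟩, rfl⟩
          · exact absurd ((memD p).1 h).2 hu
          · exact ⟨i, rfl⟩
        · rintro ⟨i, rfl⟩
          exact ⟨Or.inr ⟨(⟨u, hu⟩, i), rfl⟩, rfl⟩
      unfold degL
      rw [this, Finset.card_image_of_injective, Finset.card_univ, Fintype.card_fin]
      intro i j hij
      have h1 : vv (⟨u, hu⟩, i) = vv (⟨u, hu⟩, j) := (Prod.ext_iff.1 hij).2
      have h2 := φinj' (⟨u, hu⟩, i) (⟨u, hu⟩, j) (by rw [← hvc, ← hvc, h1])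
      exact (Prod.ext_iff.1 h2).2
  let own : (mkGraph D).ConnectedComponent → Option U := fun c =>
    if h : ∃ x, (φ x).1 = c then some (Classical.choose h).1.1 else none
  have hown : ∀ x, own (φ x).1 = some x.1.1 := by
    intro x
    have hx : ∃ y, (φ y).1 = (φ x).1 := ⟨x, rfl⟩
    simp only [own, dif_pos hx]
    rw [φinj' _ _ (Classical.choose_spec hx)]
  let l : U ⊕ V → Option U := Sum.elim
    (fun u => if tight u then own (cc (Sum.inl u)) else some u) (fun v => own (cc (Sum.inr v)))
  have hl : ∀ p ∈ F, l (Sum.inl p.1) = l (Sum.inr p.2) := by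
    intro p hp
    rcases (memF p).1 hp with h | ⟨x, rfl⟩
    · have h1 : cc (Sum.inl p.1) = cc (Sum.inr p.2) := comp_eq h
      simp only [l, Sum.elim_inl, Sum.elim_inr, if_pos ((memD p).1 h).2, h1]
    · simp only [l, Sum.elim_inl, Sum.elim_inr, if_neg x.1.2, hvc, hown]
  refine ⟨F, hFA.trans hAE, hac.anti (mkGraph_mono hFA), ?_, degF⟩
  intro c
  have e1 : (componentEdges F c).card = (g + 1) * (cU F c).card := by
    rw [componentEdges_eq, sum_degL, Finset.sum_congr rfl (fun u _ => degF u)]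
    simp [mul_comm]
  have e2 := comp_count F c
  rw [e1] at e2 ⊢
  apply Nat.mul_le_mul_left
  have e3 : ∑ p ∈ componentEdges F c, f p ≤ m * ((cV F c).card : ℤ) := by
    calc ∑ p ∈ componentEdges F c, f p
        ≤ ∑ p ∈ (Finset.univ : Finset U) ×ˢ cV F c, f p := by
          apply Finset.sum_le_sum_of_subset_of_nonneg
          · intro p hp
            have hp' := Finset.mem_filter.1 hp
            exact Finset.mem_product.2 ⟨Finset.mem_univ _,
              Finset.mem_filter.2 ⟨Finset.mem_univ _, (comp_eq hp'.1).symm.trans hp'.2⟩⟩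
          · intro p _ _; exact hf0 p
      _ = ∑ v ∈ cV F c, ∑ u, f (u, v) := by rw [Finset.sum_product_right]
      _ ≤ ∑ v ∈ cV F c, (m : ℤ) := Finset.sum_le_sum fun v _ => hfc v
      _ = _ := by simp [mul_comm]
  let w : U → ℤ := fun u => ∑ p ∈ F.filter (fun p => p.1 = u), f p
  have e4 : ∑ p ∈ componentEdges F c, f p = ∑ u ∈ cU F c, w u := by
    rw [componentEdges_eq, ← Finset.sum_fiberwise_of_maps_to (g := Prod.fst) (t := cU F c)
      (fun p hp => (Finset.mem_filter.1 hp).2)]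
    refine Finset.sum_congr rfl fun u hu => ?_
    apply Finset.sum_congr _ fun _ _ => rfl
    ext p
    simp only [Finset.mem_filter]
    constructor
    · rintro ⟨⟨h1, -⟩, h2⟩; exact ⟨h1, h2⟩
    · rintro ⟨h1, h2⟩; exact ⟨⟨h1, h2 ▸ hu⟩, h2⟩
  have w1 : ∀ u, tight u → w u = m * g + 1 := by
    intro u hu
    have := (row_le (f := f) (F := F) u (tightF u hu)).trans (hfr u)
    exact_mod_cast this
  have w2 : ∀ u, (g : ℤ) + 1 ≤ w u := by
    intro u
    have := Finset.card_nsmul_le_sum (F.filter (fun p => p.1 = u)) f 1 (by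
      intro p hp
      have h1 := (memA p).1 (hFA (Finset.mem_filter.1 hp).1)
      have h2 := hf0 p
      omega)
    have h3 : (F.filter (fun p => p.1 = u)).card = g + 1 := degF u
    rw [h3] at this
    simpa using this
  rw [e4] at e3
  have e2' : (cV F c).card ≤ g * (cU F c).card + 1 := by nlinarith
  have e5 : (m : ℤ) * (cV F c).card ≤ m * (g * (cU F c).card + 1) := by
    exact_mod_cast Nat.mul_le_mul_left m e2'
  have hmk : m ≤ k := by nlinarith [Nat.mul_le_mul_right g hm]
  by_cases hu0 : ∃ u0 ∈ cU F c, ¬ tight u0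
  · obtain ⟨u0, hu0c, hu0⟩ := hu0
    have e6 : ∀ u ∈ (cU F c).erase u0, w u = m * g + 1 := by
      intro u hu
      apply w1
      by_contra hnt
      obtain ⟨hne, huc⟩ := Finset.mem_erase.1 hu
      have := label_const l hl
        ((Finset.mem_filter.1 huc).2.trans (Finset.mem_filter.1 hu0c).2.symm)
      simp only [l, Sum.elim_inl, if_neg hnt, if_neg hu0, Option.some.injEq] at this
      exact hne this
    rw [← Finset.add_sum_erase _ _ hu0c, Finset.sum_congr rfl e6, Finset.sum_const,
      nsmul_eq_mul] at e3
    have e7 := Finset.card_erase_add_one hu0c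
    set n' := ((cU F c).erase u0).card
    rw [← e7] at e5 ⊢
    have e8 := w2 u0
    have hk' : (m : ℤ) * (g + 1) + 1 ≤ k + (g + 1) := by exact_mod_cast hk
    push_cast at e5
    have : (n' : ℤ) + 1 ≤ k := by linarith
    exact_mod_cast this
  · push Not at hu0
    rw [Finset.sum_congr rfl (fun u hu => w1 u (hu0 u hu)), Finset.sum_const, nsmul_eq_mul] at e3
    have : ((cU F c).card : ℤ) ≤ m := by linarith
    have : (cU F c).card ≤ m := by exact_mod_cast this
    omega

/-- **Theorem 2 (summary).** Let `k ≥ 1` and `h ≥ 2` and let `G = (U,V,E)` be a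
bipartite graph with `|Γ(S)| ≥ (h − 1 + 1/⌈k/h⌉)·|S|` for every `S ⊆ U`.
Then `G` has an `(h, hk)`-matching. -/
theorem stmt_0 {U V : Type*} [Fintype U] [Fintype V] (k h : ℕ) (hk : 1 ≤ k)
    (hh : 2 ≤ h) (E : Finset (U × V))
    (hN : ∀ S : Finset U,
      ((h : ℝ) - 1 + 1 / (Nat.ceil ((k : ℝ) / (h : ℝ)) : ℝ)) * S.card ≤
        ((nbhd E S).card : ℝ)) :
    ∃ F : Finset (U × V), IsSTMatching h (h * k) E F := by
  obtain ⟨g, rfl⟩ : ∃ g, h = g + 1 := ⟨h - 1, by omega⟩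
  set m := Nat.ceil ((k : ℝ) / ((g + 1 : ℕ) : ℝ)) with hmdef
  have hgpos : (0 : ℝ) < ((g + 1 : ℕ) : ℝ) := by positivity
  have hkpos : (0 : ℝ) < (k : ℝ) := by exact_mod_cast hk
  have hm : 1 ≤ m := Nat.ceil_pos.2 (div_pos hkpos hgpos)
  have hmpos : (0 : ℝ) < (m : ℝ) := by exact_mod_cast hm
  apply core k g m hm
  · have h1 : (m : ℝ) < k / ((g + 1 : ℕ) : ℝ) + 1 := Nat.ceil_lt_add_one (div_pos hkpos hgpos).le
    have h2 : (m : ℝ) * ((g + 1 : ℕ) : ℝ) < k + ((g + 1 : ℕ) : ℝ) := by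
      have := mul_lt_mul_of_pos_right h1 hgpos
      rwa [add_mul, div_mul_cancel₀ _ hgpos.ne', one_mul] at this
    have h3 : m * (g + 1) < k + (g + 1) := by exact_mod_cast h2
    omega
  · intro S
    have h1 := mul_le_mul_of_nonneg_left (hN S) hmpos.le
    have h2 : (m : ℝ) * ((((g + 1 : ℕ) : ℝ) - 1 + 1 / (m : ℝ)) * S.card)
        = (m * g + 1) * S.card := by
      push_cast
      field_simp
      ring
    rw [h2] at h1
    exact_mod_cast h1
end
end

section
/- Let G = (U,V,E) be a bipartite graph in which every vertex of U has degree at most 3, and suppose that |Γ(S)| ≥ (5/3)·|S| for every subset S of U. Then G has a (2,4)-matching. -/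
open scoped Classical

noncomputable section

variable {U V : Type*}

/-- A vertex set closed under adjacency is closed under reachability. -/
lemma reach_closed {W : Type*} {G : SimpleGraph W} {T : W → Prop}
    (hT : ∀ x y, G.Adj x y → T x → T y) {x y : W} (h : G.Reachable x y) (hx : T x) : T y := by
  obtain ⟨w⟩ := h
  induction w with
  | nil => exact hx
  | cons hadj _ ih => exact ih (hT _ _ hadj hx)

lemma mk_adj_lr {F : Finset (U × V)} {u : U} {v : V} :
    (mkGraph F).Adj (Sum.inl u) (Sum.inr v) ↔ (u, v) ∈ F := by
  simp [mkGraph]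

lemma mk_adj_rl {F : Finset (U × V)} {u : U} {v : V} :
    (mkGraph F).Adj (Sum.inr v) (Sum.inl u) ↔ (u, v) ∈ F := by
  simp [mkGraph]

lemma mk_adj_ll {F : Finset (U × V)} {u u' : U} :
    ¬ (mkGraph F).Adj (Sum.inl u) (Sum.inl u') := by
  simp [mkGraph]

lemma mk_adj_rr {F : Finset (U × V)} {u u' : V} :
    ¬ (mkGraph F).Adj (Sum.inr u) (Sum.inr u') := by
  simp [mkGraph]

/-- If every left vertex shares at most one right vertex, with at most one other left vertex,
then the graph is acyclic. -/
lemma acyclic_of_share {F : Finset (U × V)}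
    (hs : ∀ u u' u'' v v', u' ≠ u → u'' ≠ u → (u, v) ∈ F → (u', v) ∈ F → (u, v') ∈ F →
      (u'', v') ∈ F → u' = u'' ∧ v = v') : (mkGraph F).IsAcyclic := by
  have key : ∀ u v, (u, v) ∈ F → (mkGraph F).IsBridge s(Sum.inl u, Sum.inr v) := by
    intro u v huv
    rw [SimpleGraph.isBridge_iff]
    intro hr
    by_cases hsh : ∃ u', u' ≠ u ∧ (u', v) ∈ F
    · obtain ⟨u', hne, hu'⟩ := hsh
      have := reach_closed (T := fun z => z = Sum.inl u ∨ ∃ w, w ≠ v ∧ (u, w) ∈ F ∧ z = Sum.inr w)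
        ?_ hr (Or.inl rfl)
      · rcases this with h | ⟨w, hw, _, h⟩
        · simp at h
        · exact hw (Sum.inr.inj h).symm
      · rintro (a | a) (b | b) hab ha
        · exact absurd hab.1 mk_adj_ll
        · have h1 := mk_adj_lr.1 (SimpleGraph.deleteEdges_le _ hab)
          have h2 : ¬ (a = u ∧ b = v) := by
            rintro ⟨rfl, rfl⟩
            simp [SimpleGraph.deleteEdges_adj] at hab
          simp at ha
          subst ha
          exact Or.inr ⟨b, fun h => h2 ⟨rfl, h⟩, h1, rfl⟩
        · have h1 := mk_adj_rl.1 (SimpleGraph.deleteEdges_le _ hab)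
          simp at ha
          by_cases hb : b = u
          · exact Or.inl (by rw [hb])
          · exact absurd (hs u u' b v a hne hb huv hu' ha.2 h1).2.symm ha.1
        · exact absurd hab.1 mk_adj_rr
    · push Not at hsh
      have := reach_closed (T := fun z => z = Sum.inr v) ?_ hr.symm rfl
      · simp at this
      · rintro (a | a) (b | b) hab ha
        · simp at ha
        · simp at ha
        · have h1 := mk_adj_rl.1 (SimpleGraph.deleteEdges_le _ hab)
          simp at ha
          subst ha
          have : b = u := by
            by_contra hb
            exact hsh b hb h1
          subst this
          simp [SimpleGraph.deleteEdges_adj] at hab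
        · exact absurd hab.1 mk_adj_rr
  rw [SimpleGraph.isAcyclic_iff_forall_adj_isBridge]
  rintro (a | a) (b | b) hab
  · exact absurd hab mk_adj_ll
  · exact key _ _ (mk_adj_lr.1 hab)
  · rw [Sym2.eq_swap]
    exact key _ _ (mk_adj_rl.1 hab)
  · exact absurd hab mk_adj_rr

lemma component_of_share {F : Finset (U × V)} (hd : ∀ u, degL F u = 2)
    (hs : ∀ u u' u'' v v', u' ≠ u → u'' ≠ u → (u, v) ∈ F → (u', v) ∈ F → (u, v') ∈ F →
      (u'', v') ∈ F → u' = u'' ∧ v = v') (c : (mkGraph F).ConnectedComponent) :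
    (componentEdges F c).card ≤ 4 := by
  by_cases hne : (componentEdges F c).Nonempty
  swap
  · rw [Finset.not_nonempty_iff_eq_empty.1 hne]; simp
  obtain ⟨⟨u, v⟩, huv⟩ := hne
  simp only [componentEdges, Finset.mem_filter] at huv
  have hcl : ∀ u', (mkGraph F).connectedComponentMk (Sum.inl u') = c →
      u' = u ∨ ∃ w, (u, w) ∈ F ∧ (u', w) ∈ F := by
    intro u' hu'
    have hr : (mkGraph F).Reachable (Sum.inl u) (Sum.inl u') := by
      rw [← SimpleGraph.ConnectedComponent.eq, huv.2, hu']
    have := reach_closed (T := fun z => ∃ u', (u' = u ∨ ∃ w, (u, w) ∈ F ∧ (u', w) ∈ F) ∧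
        (z = Sum.inl u' ∨ ∃ w, (u', w) ∈ F ∧ z = Sum.inr w)) ?_ hr ⟨u, Or.inl rfl, Or.inl rfl⟩
    · obtain ⟨u1, h1, h2⟩ := this
      simp at h2
      subst h2
      exact h1
    · rintro (a | a) (b | b) hab ha
      · exact absurd hab mk_adj_ll
      · have h1 := mk_adj_lr.1 hab
        obtain ⟨u1, h2, h3⟩ := ha
        simp at h3
        subst h3
        exact ⟨a, h2, Or.inr ⟨b, h1, rfl⟩⟩
      · have h1 := mk_adj_rl.1 hab
        obtain ⟨u1, h2, h3⟩ := ha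
        simp at h3
        refine ⟨b, ?_, Or.inl rfl⟩
        by_cases hbu : b = u
        · exact Or.inl hbu
        right
        rcases h2 with rfl | ⟨w, hw, hw'⟩
        · exact ⟨a, h3, h1⟩
        · by_cases e1 : u1 = u
          · subst e1; exact ⟨a, h3, h1⟩
          by_cases e2 : b = u1
          · subst e2; exact ⟨w, hw, hw'⟩
          · exact absurd (hs u1 u b w a (Ne.symm e1) e2 hw' hw h3 h1).1.symm hbu
      · exact absurd hab mk_adj_rr
  have hu : ∃ u1, ∀ u', (mkGraph F).connectedComponentMk (Sum.inl u') = c → u' = u ∨ u' = u1 := by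
    by_cases hex : ∃ u1, u1 ≠ u ∧ ∃ w, (u, w) ∈ F ∧ (u1, w) ∈ F
    · obtain ⟨u1, hne, w, h1, h2⟩ := hex
      refine ⟨u1, fun u' h' => ?_⟩
      by_cases e : u' = u
      · exact Or.inl e
      rcases hcl u' h' with h | ⟨w', h3, h4⟩
      · exact Or.inl h
      · exact Or.inr (hs u u' u1 w' w e hne h3 h4 h1 h2).1
    · refine ⟨u, fun u' h' => ?_⟩
      rcases hcl u' h' with h | h
      · exact Or.inl h
      · left
        by_contra e
        exact hex ⟨u', e, h⟩
  obtain ⟨u1, hu1⟩ := hu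
  have hsub : componentEdges F c ⊆ (F.filter fun p => p.1 = u) ∪ (F.filter fun p => p.1 = u1) := by
    intro p hp
    simp only [componentEdges, Finset.mem_filter] at hp
    simp only [Finset.mem_union, Finset.mem_filter]
    rcases hu1 _ hp.2 with h | h
    · exact Or.inl ⟨hp.1, h⟩
    · exact Or.inr ⟨hp.1, h⟩
  have h1 := hd u
  have h2 := hd u1
  unfold degL at h1 h2
  have := (Finset.card_le_card hsub).trans (Finset.card_union_le _ _)
  omega

/-- An integral flow: every left vertex receives five units, every right vertex gives at most
three. -/
lemma exists_flow [Fintype U] [Fintype V] (E : Finset (U × V))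
    (hN : ∀ S : Finset U, 5 * S.card ≤ 3 * (nbhd E S).card) :
    ∃ x : U → V → ℕ, (∀ u v, 0 < x u v → (u, v) ∈ E) ∧ (∀ u, ∑ v, x u v = 5) ∧
      ∀ v, ∑ u, x u v ≤ 3 := by
  let t : U × Fin 5 → Finset (V × Fin 3) := fun p => nbhd E {p.1} ×ˢ Finset.univ
  have hall : ∀ S : Finset (U × Fin 5), S.card ≤ (S.biUnion t).card := by
    intro S
    have h1 : S.card ≤ (S.image Prod.fst).card * 5 := by
      have : S ⊆ (S.image Prod.fst) ×ˢ Finset.univ := by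
        intro p hp
        simp only [Finset.mem_product, Finset.mem_univ, and_true]
        exact Finset.mem_image_of_mem _ hp
      have := Finset.card_le_card this
      simpa [Finset.card_product] using this
    have h2 : S.biUnion t = nbhd E (S.image Prod.fst) ×ˢ Finset.univ := by
      ext ⟨v, i⟩
      simp [t, nbhd]
      grind
    rw [h2, Finset.card_product]
    have := hN (S.image Prod.fst)
    simp
    omega
  obtain ⟨f, hf, hft⟩ := (Finset.all_card_le_biUnion_card_iff_exists_injective t).1 hall
  refine ⟨fun u v => (Finset.univ.filter fun i : Fin 5 => (f (u, i)).1 = v).card, ?_, ?_, ?_⟩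
  · intro u v h
    obtain ⟨i, hi⟩ := Finset.card_pos.1 h
    have := hft (u, i)
    simp [t, nbhd] at this hi
    rwa [hi] at this
  · intro u
    have := Finset.card_eq_sum_card_fiberwise (s := (Finset.univ : Finset (Fin 5)))
      (t := (Finset.univ : Finset V)) (f := fun i => (f (u, i)).1) (by simp)
    simpa using this.symm
  · intro v
    rw [← Finset.card_sigma]
    have h33 : (Finset.univ : Finset (Fin 3)).card = 3 := by simp
    refine le_trans ?_ h33.le
    refine Finset.card_le_card_of_injOn (fun p => (f (p.1, p.2)).2) (by simp) ?_
    rintro ⟨u, i⟩ h ⟨u', i'⟩ h' e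
    simp at h h' e
    have := hf (Prod.ext (h.trans h'.symm) e)
    simp at this
    simp [this]

lemma flow_types [Fintype U] [Fintype V] (E : Finset (U × V)) (hdeg : ∀ u : U, degL E u ≤ 3)
    (x : U → V → ℕ) (hE : ∀ u v, 0 < x u v → (u, v) ∈ E) (h5 : ∀ u, ∑ v, x u v = 5)
    (h3 : ∀ u v, x u v ≤ 3) (u : U) :
    (∃ a b, a ≠ b ∧ 2 ≤ x u a ∧ 2 ≤ x u b) ∨
      ∃ h, x u h = 3 ∧ 2 ≤ (Finset.univ.filter fun v => x u v = 1).card := by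
  let T : Finset V := Finset.univ.filter fun v => 0 < x u v
  have hT : T.card ≤ 3 := by
    refine le_trans ?_ (hdeg u)
    unfold degL
    refine Finset.card_le_card_of_injOn (fun v => (u, v)) ?_ ?_
    · intro v hv
      simp [T] at hv ⊢
      exact hE u v hv
    · intro a _ b _ h
      simpa using h
  have hsum : ∑ v ∈ T, x u v = 5 := by
    rw [← h5 u]
    apply Finset.sum_subset (Finset.subset_univ _)
    intro v _ hv
    simp [T] at hv
    exact hv
  have hc : T.card = 0 ∨ T.card = 1 ∨ T.card = 2 ∨ T.card = 3 := by omega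
  rcases hc with h | h | h | h
  · rw [Finset.card_eq_zero.1 h] at hsum
    simp at hsum
  · obtain ⟨a, ha⟩ := Finset.card_eq_one.1 h
    rw [ha] at hsum
    simp at hsum
    have := h3 u a
    omega
  · obtain ⟨a, b, hab, ha⟩ := Finset.card_eq_two.1 h
    rw [ha, Finset.sum_pair hab] at hsum
    have := h3 u a
    have := h3 u b
    exact Or.inl ⟨a, b, hab, by omega, by omega⟩
  · obtain ⟨a, b, c, hab, hac, hbc, ha⟩ := Finset.card_eq_three.1 h
    rw [ha, Finset.sum_insert (by simp [hab, hac]), Finset.sum_pair hbc] at hsum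
    have hpos : ∀ v ∈ T, 0 < x u v := by simp [T]
    have pa := hpos a (by simp [ha])
    have pb := hpos b (by simp [ha])
    have pc := hpos c (by simp [ha])
    have two : ∀ p q, p ≠ q → x u p = 1 → x u q = 1 →
        2 ≤ (Finset.univ.filter fun v => x u v = 1).card := by
      intro p q hpq hp hq
      rw [← Finset.card_pair hpq]
      apply Finset.card_le_card
      intro z hz
      simp at hz
      rcases hz with rfl | rfl <;> simp [hp, hq]
    by_cases e1 : 2 ≤ x u a ∧ 2 ≤ x u b
    · exact Or.inl ⟨a, b, hab, e1⟩
    by_cases e2 : 2 ≤ x u a ∧ 2 ≤ x u c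
    · exact Or.inl ⟨a, c, hac, e2⟩
    by_cases e3 : 2 ≤ x u b ∧ 2 ≤ x u c
    · exact Or.inl ⟨b, c, hbc, e3⟩
    right
    have : x u a = 3 ∧ x u b = 1 ∧ x u c = 1 ∨ x u b = 3 ∧ x u a = 1 ∧ x u c = 1 ∨
      x u c = 3 ∧ x u a = 1 ∧ x u b = 1 := by omega
    rcases this with ⟨p, q, r⟩ | ⟨p, q, r⟩ | ⟨p, q, r⟩
    · exact ⟨a, p, two b c hbc q r⟩
    · exact ⟨b, p, two a c hac q r⟩
    · exact ⟨c, p, two a b hab q r⟩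

/-- Second application of Hall's theorem: the left vertices of flow type (3,1,1) choose one of
their neighbours of flow 1. -/
lemma exists_choice [Fintype U] [Fintype V] (x : U → V → ℕ) (h5 : ∀ u, ∑ v, x u v = 5)
    (h3 : ∀ v, ∑ u, x u v ≤ 3) (C : Finset U)
    (hC : ∀ u ∈ C, 2 ≤ (Finset.univ.filter fun v => x u v = 1).card) :
    ∃ r : C → U ⊕ V × Fin 2, Function.Injective r ∧ ∀ u : C, ∃ v, x u v = 1 ∧
      ((∃ w, 2 ≤ x w v ∧ r u = Sum.inl w) ∨
        ((∀ w, x w v < 2) ∧ ∃ i, r u = Sum.inr (v, i))) := by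
  let ok : U → U ⊕ V × Fin 2 → Prop := fun u z => ∃ v, x u v = 1 ∧
      ((∃ w, 2 ≤ x w v ∧ z = Sum.inl w) ∨ ((∀ w, x w v < 2) ∧ ∃ i, z = Sum.inr (v, i)))
  let t : C → Finset (U ⊕ V × Fin 2) := fun u => Finset.univ.filter fun z => ok u z
  have hall : ∀ S : Finset C, S.card ≤ (S.biUnion t).card := by
    intro S
    let owned : V → Prop := fun v => ∃ w, 2 ≤ x w v
    let D : Finset (C × V) := (S ×ˢ Finset.univ).filter fun p => x p.1 p.2 = 1
    have hD : S.card * 2 ≤ D.card := by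
      have : D = (S.sigma (fun u => Finset.univ.filter fun v => x u v = 1)).map
          (Equiv.sigmaEquivProd C V).toEmbedding := by
        ext ⟨u, v⟩
        simp [D, Equiv.sigmaEquivProd]
      rw [this, Finset.card_map, Finset.card_sigma, ← smul_eq_mul]
      exact Finset.card_nsmul_le_sum _ _ _ (fun u _ => hC u u.2)
    let D1 := D.filter fun p => owned p.2
    let D2 := D.filter fun p => ¬ owned p.2
    have hDD : D1.card + D2.card = D.card := Finset.card_filter_add_card_filter_not _
    let own : C × V → U := fun p => if h : owned p.2 then h.choose else p.1
    have hown : ∀ p ∈ D1, 2 ≤ x (own p) p.2 := by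
      intro p hp
      have h : owned p.2 := (Finset.mem_filter.1 hp).2
      simp only [own, dif_pos h]
      exact h.choose_spec
    have hx1 : ∀ p ∈ D, p.1 ∈ S ∧ x p.1 p.2 = 1 := by
      intro p hp
      simpa [D] using hp
    have c1 : D1.card ≤ 2 * (D1.image own).card := by
      apply Finset.card_le_mul_card_image
      intro w _
      have hb : (Finset.univ.filter fun v => 2 ≤ x w v).card ≤ 2 := by
        have : (Finset.univ.filter fun v => 2 ≤ x w v).card • 2 ≤
            ∑ v ∈ Finset.univ.filter (fun v => 2 ≤ x w v), x w v :=
          Finset.card_nsmul_le_sum _ _ _ (by simp)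
        have h' := this.trans (Finset.sum_le_sum_of_subset (Finset.subset_univ _))
        rw [h5 w, smul_eq_mul] at h'
        omega
      refine le_trans (Finset.card_le_card_of_injOn (fun p => p.2) ?_ ?_) hb
      · intro p hp
        simp only [Finset.coe_filter, Set.mem_setOf_eq] at hp
        have := hown p hp.1
        rw [hp.2] at this
        simpa using this
      · intro p hp q hq hpq
        simp only [Finset.coe_filter, Set.mem_setOf_eq] at hp hq
        have o := hown p hp.1
        have e1 := (hx1 p (Finset.mem_filter.1 hp.1).1).2
        have e2 := (hx1 q (Finset.mem_filter.1 hq.1).1).2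
        have hpq' : p.2 = q.2 := hpq
        rw [← hpq'] at e2
        by_contra hne
        have hne1 : (p.1 : U) ≠ q.1 := fun h => hne (Prod.ext (Subtype.ext h) hpq')
        have n1 : own p ≠ p.1 := by intro h; rw [h] at o; omega
        have n2 : own p ≠ q.1 := by intro h; rw [h] at o; omega
        have : x (own p) p.2 + (x p.1 p.2 + x q.1 p.2) ≤ 3 := by
          rw [← Finset.sum_pair hne1 (f := fun u => x u p.2),
            ← Finset.sum_insert (f := fun u => x u p.2) (by simp [n1, n2])]
          exact (Finset.sum_le_sum_of_subset (Finset.subset_univ _)).trans (h3 p.2)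
        omega
    have c2 : D2.card ≤ 3 * (D2.image Prod.snd).card := by
      apply Finset.card_le_mul_card_image
      intro v _
      have hb : (Finset.univ.filter fun u => 1 ≤ x u v).card ≤ 3 := by
        have : (Finset.univ.filter fun u => 1 ≤ x u v).card • 1 ≤
            ∑ u ∈ Finset.univ.filter (fun u => 1 ≤ x u v), x u v :=
          Finset.card_nsmul_le_sum _ _ _ (by simp)
        have h' := (this.trans (Finset.sum_le_sum_of_subset (Finset.subset_univ _))).trans (h3 v)
        rw [smul_eq_mul] at h'
        omega
      refine le_trans (Finset.card_le_card_of_injOn (fun p => (p.1 : U)) ?_ ?_) hb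
      · intro p hp
        simp only [Finset.coe_filter, Set.mem_setOf_eq] at hp
        have e1 := (hx1 p (Finset.mem_filter.1 hp.1).1).2
        rw [hp.2] at e1
        simp [e1]
      · intro p hp q hq hpq
        simp only [Finset.coe_filter, Set.mem_setOf_eq] at hp hq
        exact Prod.ext (Subtype.ext hpq) (hp.2.trans hq.2.symm)
    have hsub : (D1.image own).disjSum ((D2.image Prod.snd) ×ˢ (Finset.univ : Finset (Fin 2))) ⊆
        S.biUnion t := by
      intro z hz
      rw [Finset.mem_disjSum] at hz
      simp only [Finset.mem_biUnion, t, Finset.mem_filter, Finset.mem_univ, true_and]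
      rcases hz with ⟨w, hw, rfl⟩ | ⟨⟨v, i⟩, hw, rfl⟩
      · obtain ⟨p, hp, rfl⟩ := Finset.mem_image.1 hw
        have e1 := hx1 p (Finset.mem_filter.1 hp).1
        exact ⟨p.1, e1.1, p.2, e1.2, Or.inl ⟨own p, hown p hp, rfl⟩⟩
      · obtain ⟨p, hp, hpv⟩ := Finset.mem_image.1 (Finset.mem_product.1 hw).1
        have e1 := hx1 p (Finset.mem_filter.1 hp).1
        have hno : ¬ owned p.2 := (Finset.mem_filter.1 hp).2
        refine ⟨p.1, e1.1, p.2, e1.2, Or.inr ⟨fun w => ?_, i, ?_⟩⟩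
        · by_contra hw2
          exact hno ⟨w, not_lt.1 hw2⟩
        · simp only at hpv
          rw [hpv]
    have hfin := Finset.card_le_card hsub
    rw [Finset.card_disjSum, Finset.card_product] at hfin
    simp only [Finset.card_univ, Fintype.card_fin] at hfin
    omega
  obtain ⟨r, hr, hrt⟩ := (Finset.all_card_le_biUnion_card_iff_exists_injective t).1 hall
  refine ⟨r, hr, fun u => ?_⟩
  have := hrt u
  simpa [t, ok] using this

/-- **Conjecture of Bonacina, Galesi, Huynh and Wollan.** Let `G = (U,V,E)` be a
bipartite graph in which every vertex of `U` has degree at most `3` and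
`|Γ(S)| ≥ (5/3)·|S|` for every `S ⊆ U`. Then `G` has a `(2,4)`-matching. -/
theorem stmt_2 {U V : Type*} [Fintype U] [Fintype V] (E : Finset (U × V))
    (hdeg : ∀ u : U, degL E u ≤ 3)
    (hN : ∀ S : Finset U, (5 / 3 : ℝ) * S.card ≤ ((nbhd E S).card : ℝ)) :
    ∃ F : Finset (U × V), IsSTMatching 2 4 E F := by
  have hN' : ∀ S : Finset U, 5 * S.card ≤ 3 * (nbhd E S).card := by
    intro S
    have h := hN S
    have h' : (5 * S.card : ℝ) ≤ 3 * (nbhd E S).card := by linarith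
    exact_mod_cast h'
  obtain ⟨x, hE, h5, h3⟩ := exists_flow E hN'
  have pair3 : ∀ v u u', u ≠ u' → x u v + x u' v ≤ 3 := by
    intro v u u' h
    rw [← Finset.sum_pair h (f := fun u => x u v)]
    exact (Finset.sum_le_sum_of_subset (Finset.subset_univ _)).trans (h3 v)
  have one3 : ∀ u v, x u v ≤ 3 := fun u v =>
    (Finset.single_le_sum (f := fun u => x u v) (fun _ _ => Nat.zero_le _)
      (Finset.mem_univ u)).trans (h3 v)
  have types := flow_types E hdeg x hE h5 one3
  let C : Finset U := Finset.univ.filter fun u => ¬ ∃ a b, a ≠ b ∧ 2 ≤ x u a ∧ 2 ≤ x u b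
  have hC : ∀ u ∈ C, ∃ h, x u h = 3 ∧ 2 ≤ (Finset.univ.filter fun v => x u v = 1).card := by
    intro u hu
    exact (types u).resolve_left (Finset.mem_filter.1 hu).2
  obtain ⟨r, hr, hrq⟩ := exists_choice x h5 h3 C (fun u hu => (hC u hu).choose_spec.2)
  -- every vertex gets a pair of neighbours
  have hab : ∀ u, ∃ a b, a ≠ b ∧ 2 ≤ x u a ∧ ((u ∉ C ∧ 2 ≤ x u b) ∨
      (x u a = 3 ∧ ∃ hu : u ∈ C, x u b = 1 ∧ ((∃ w, 2 ≤ x w b ∧ r ⟨u, hu⟩ = Sum.inl w) ∨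
        ((∀ w, x w b < 2) ∧ ∃ i, r ⟨u, hu⟩ = Sum.inr (b, i))))) := by
    intro u
    by_cases hu : u ∈ C
    · obtain ⟨h, hh, _⟩ := hC u hu
      obtain ⟨v, hv, hv'⟩ := hrq ⟨u, hu⟩
      refine ⟨h, v, ?_, by omega, Or.inr ⟨hh, hu, hv, hv'⟩⟩
      rintro rfl
      simp only at hv
      omega
    · have : ∃ a b, a ≠ b ∧ 2 ≤ x u a ∧ 2 ≤ x u b := by
        by_contra hcon
        exact hu (Finset.mem_filter.2 ⟨Finset.mem_univ _, hcon⟩)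
      obtain ⟨a, b, h1, h2, h3⟩ := this
      exact ⟨a, b, h1, h2, Or.inl ⟨hu, h3⟩⟩
  choose a b hne ha hb using hab
  let F : Finset (U × V) := Finset.univ.filter fun p => p.2 = a p.1 ∨ p.2 = b p.1
  have hF : ∀ u v, (u, v) ∈ F ↔ v = a u ∨ v = b u := by
    intro u v
    simp [F]
  have hd : ∀ u, degL F u = 2 := by
    intro u
    have : (F.filter fun p => p.1 = u) = {(u, a u), (u, b u)} := by
      ext ⟨u', v⟩
      simp only [Finset.mem_filter, hF, Finset.mem_insert, Finset.mem_singleton, Prod.mk.injEq]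
      constructor
      · rintro ⟨h, rfl⟩
        simpa using h
      · rintro (⟨rfl, rfl⟩ | ⟨rfl, rfl⟩) <;> simp
    unfold degL
    rw [this, Finset.card_pair]
    simp [hne u]
  have hpos : ∀ u v, (u, v) ∈ F → 1 ≤ x u v := by
    intro u v h
    rcases (hF u v).1 h with rfl | rfl
    · have := ha u; omega
    · rcases hb u with h | ⟨_, _, h, _⟩ <;> omega
  -- an edge of F either has flow at least two, or is the chosen edge of a vertex of C
  have hcase : ∀ u v, (u, v) ∈ F → 2 ≤ x u v ∨ (∃ hu : u ∈ C, v = b u ∧ x u v = 1 ∧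
      ((∃ w, 2 ≤ x w v ∧ r ⟨u, hu⟩ = Sum.inl w) ∨
        ((∀ w, x w v < 2) ∧ ∃ i, r ⟨u, hu⟩ = Sum.inr (v, i)))) := by
    intro u v h
    rcases (hF u v).1 h with rfl | rfl
    · exact Or.inl (ha u)
    · rcases hb u with h | ⟨_, hu, h, h'⟩
      · exact Or.inl h.2
      · exact Or.inr ⟨hu, rfl, h, h'⟩
  have owner : ∀ v w w', 2 ≤ x w v → 2 ≤ x w' v → w = w' := by
    intro v w w' h h'
    by_contra hn
    have := pair3 v w w' hn
    omega
  have hs : ∀ u u' u'' v v', u' ≠ u → u'' ≠ u → (u, v) ∈ F → (u', v) ∈ F → (u, v') ∈ F →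
      (u'', v') ∈ F → u' = u'' ∧ v = v' := by
    intro u u' u'' v v' n1 n2 f1 f2 f3 f4
    by_cases hu : u ∈ C
    · -- the shared vertex must be the chosen one
      have hb' : x u (a u) = 3 := by
        rcases hb u with h | h
        · exact absurd hu h.1
        · exact h.1
      have na : ∀ w z, w ≠ u → (u, z) ∈ F → (w, z) ∈ F → z = b u := by
        intro w z hw h h'
        rcases (hF u z).1 h with rfl | h
        · have := pair3 (a u) w u hw
          have := hpos _ _ h'
          omega
        · exact h
      have e1 := na u' v n1 f1 f2
      have e2 := na u'' v' n2 f3 f4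
      have e3 : v' = v := by rw [e1, e2]
      subst e3
      refine ⟨?_, rfl⟩
      have hxu : ¬ 2 ≤ x u v' := by
        rcases hb u with h | ⟨_, _, h, _⟩
        · exact absurd hu h.1
        · rw [e1]; omega
      obtain ⟨_, _, _, k⟩ := (hcase _ _ f1).resolve_left hxu
      -- no third vertex of C at an owned vertex
      have own_no : ∀ w z, 2 ≤ x w v' → z ≠ u → (z, v') ∈ F → z = w := by
        intro w z hw hz hzF
        rcases k with ⟨w1, hw1, k1⟩ | ⟨k1, _⟩
        · rcases hcase _ _ hzF with h | ⟨hzC, _, _, ⟨w2, hw2, k2⟩ | ⟨k2, _⟩⟩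
          · exact owner _ _ _ h hw
          · have : w1 = w2 := owner _ _ _ hw1 hw2
            rw [this, ← k2] at k1
            have := hr k1
            simp at this
            exact absurd this.symm hz
          · have := k2 w; omega
        · have := k1 w; omega
      by_cases hex : ∃ w, 2 ≤ x w v'
      · obtain ⟨w, hw⟩ := hex
        rw [own_no w u' hw n1 f2, own_no w u'' hw n2 f4]
      · push Not at hex
        have get : ∀ z, (z, v') ∈ F → ∃ hz : z ∈ C, ∃ i, r ⟨z, hz⟩ = Sum.inr (v', i) := by
          intro z hz
          rcases hcase _ _ hz with h | ⟨hzC, _, _, ⟨w2, hw2, k2⟩ | ⟨_, k2⟩⟩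
          · have := hex z; omega
          · have := hex w2; omega
          · exact ⟨hzC, k2⟩
        obtain ⟨c0, i0, q0⟩ := get u f1
        obtain ⟨c1, i1, q1⟩ := get u' f2
        obtain ⟨c2, i2, q2⟩ := get u'' f4
        have d1 : i1 ≠ i0 := by
          intro h
          rw [h, ← q0] at q1
          have := hr q1
          simp at this
          exact n1 this
        have d2 : i2 ≠ i0 := by
          intro h
          rw [h, ← q0] at q2
          have := hr q2
          simp at this
          exact n2 this
        have d3 : i1 = i2 := by omega
        rw [d3, ← q2] at q1
        have := hr q1
        simpa using this
    · have big : ∀ z, (u, z) ∈ F → 2 ≤ x u z := by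
        intro z hz
        rcases hcase _ _ hz with h | ⟨h, _⟩
        · exact h
        · exact absurd h hu
      have get : ∀ w z, w ≠ u → (u, z) ∈ F → (w, z) ∈ F →
          ∃ hw : w ∈ C, z = b w ∧ r ⟨w, hw⟩ = Sum.inl u := by
        intro w z hw h h'
        have hz := big z h
        rcases hcase _ _ h' with k | ⟨hwC, e, _, ⟨w2, hw2, k2⟩ | ⟨k2, _⟩⟩
        · exact absurd (owner _ _ _ k hz) hw
        · rw [owner _ _ _ hw2 hz] at k2
          exact ⟨hwC, e, k2⟩
        · have := k2 u; omega
      obtain ⟨c1, e1, q1⟩ := get u' v n1 f1 f2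
      obtain ⟨c2, e2, q2⟩ := get u'' v' n2 f3 f4
      rw [← q2] at q1
      have := hr q1
      simp at this
      exact ⟨this, by rw [e1, e2, this]⟩
  refine ⟨F, ?_, acyclic_of_share hs, component_of_share hd hs, hd⟩
  rintro ⟨u, v⟩ h
  exact hE u v (hpos u v h)
end
end

section
/- Let k ≥ 2 and d > h ≥ 2 be integers and let α be a real number with α < h - 1 + (d - h + 1)/(k + 1 + (d - h - 1)·⌈k/h⌉). Then there exists a bipartite graph G = (U,V,E) in which every vertex of U has degree at most d, such that |Γ(S)| ≥ α·|S| for every subset S of U, but G does not contain an (h, hk)-matching. -/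
open scoped Classical

noncomputable section

variable {U V : Type*}

/-- The edges of `F` pulled back along a pair of maps. -/
def pull {U V U' V' : Type*} [Fintype U] [Fintype V] (f : U → U') (g : V → V')
    (F : Finset (U' × V')) : Finset (U × V) :=
  Finset.univ.filter fun p => (f p.1, g p.2) ∈ F

lemma mem_pull {U V U' V' : Type*} [Fintype U] [Fintype V] (f : U → U') (g : V → V')
    (F : Finset (U' × V')) (p : U × V) : p ∈ pull f g F ↔ (f p.1, g p.2) ∈ F := by
  simp [pull]

lemma mem_nbhd {U V : Type*} (E : Finset (U × V)) (S : Finset U) (v : V) :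
    v ∈ nbhd E S ↔ ∃ u ∈ S, (u, v) ∈ E := by
  simp only [nbhd, Finset.mem_image, Finset.mem_filter, Prod.exists]
  constructor
  · rintro ⟨a, b, ⟨h1, h2⟩, rfl⟩
    exact ⟨a, h2, h1⟩
  · rintro ⟨u, h1, h2⟩
    exact ⟨u, v, ⟨h2, h1⟩, rfl⟩

lemma mkGraph_adj {U V : Type*} (F : Finset (U × V)) (p : U × V) (hp : p ∈ F) :
    (mkGraph F).Adj (Sum.inl p.1) (Sum.inr p.2) := by
  rw [mkGraph, SimpleGraph.fromRel_adj]
  exact ⟨by simp, Or.inl ⟨p, hp, rfl, rfl⟩⟩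

lemma reach_map {U V U' V' : Type*} (f : U → U') (g : V → V')
    (F : Finset (U × V)) (F' : Finset (U' × V')) (hF : ∀ p ∈ F, (f p.1, g p.2) ∈ F')
    {x y : U ⊕ V} (hxy : (mkGraph F).Reachable x y) :
    (mkGraph F').Reachable (Sum.map f g x) (Sum.map f g y) := by
  let φ : mkGraph F →g mkGraph F' :=
    { toFun := Sum.map f g
      map_rel' := by
        intro a b hab
        rw [mkGraph, SimpleGraph.fromRel_adj] at hab
        rcases hab with ⟨_, ⟨p, hp, rfl, rfl⟩ | ⟨p, hp, rfl, rfl⟩⟩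
        · exact mkGraph_adj F' _ (hF p hp)
        · exact (mkGraph_adj F' _ (hF p hp)).symm }
  exact hxy.map φ

lemma comp_map {U V U' V' : Type*} (f : U → U') (g : V → V')
    (F : Finset (U × V)) (F' : Finset (U' × V')) (hF : ∀ p ∈ F, (f p.1, g p.2) ∈ F')
    (x : U ⊕ V) (p : U × V)
    (hp : p ∈ componentEdges F ((mkGraph F).connectedComponentMk x)) :
    (f p.1, g p.2) ∈
      componentEdges F' ((mkGraph F').connectedComponentMk (Sum.map f g x)) := by
  simp only [componentEdges, Finset.mem_filter, SimpleGraph.ConnectedComponent.eq] at hp ⊢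
  exact ⟨hF p hp.1, reach_map f g F F' hF hp.2⟩

lemma comp_card {U V U' V' : Type*} (f : U → U') (g : V → V')
    (hf : Function.Injective f) (hg : Function.Injective g)
    (F : Finset (U × V)) (F' : Finset (U' × V')) (hF : ∀ p ∈ F, (f p.1, g p.2) ∈ F')
    (x : U ⊕ V) :
    (componentEdges F ((mkGraph F).connectedComponentMk x)).card ≤
      (componentEdges F' ((mkGraph F').connectedComponentMk (Sum.map f g x))).card := by
  refine Finset.card_le_card_of_injOn (fun p => (f p.1, g p.2)) ?_ ?_
  · intro p hp
    exact comp_map f g F F' hF x p hp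
  · intro p _ q _ hpq
    simp only [Prod.mk.injEq] at hpq
    exact Prod.ext (hf hpq.1) (hg hpq.2)

lemma degL_pull {U V U' V' : Type*} [Fintype U] [Fintype V] (f : U → U') (g : V → V')
    (hf : Function.Injective f) (hg : Function.Injective g)
    (F : Finset (U' × V')) (u : U) (hs : ∀ v', (f u, v') ∈ F → ∃ v, g v = v') :
    degL (pull f g F) u = degL F (f u) := by
  unfold degL
  refine Finset.card_bij (fun p _ => (f p.1, g p.2)) ?_ ?_ ?_
  · intro p hp
    simp only [Finset.mem_filter, mem_pull] at hp ⊢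
    exact ⟨hp.1, by rw [hp.2]⟩
  · intro p _ q _ hpq
    simp only [Prod.mk.injEq] at hpq
    exact Prod.ext (hf hpq.1) (hg hpq.2)
  · rintro ⟨a, b⟩ hp
    simp only [Finset.mem_filter] at hp
    obtain ⟨h1, rfl⟩ := hp
    obtain ⟨v, rfl⟩ := hs _ h1
    exact ⟨(u, v), by simp [mem_pull, h1], rfl⟩

/-- Insertion with the classical decidability instance. -/
def ins {V : Type*} (v : V) (A : Finset V) : Finset V := insert v A

lemma mem_ins {V : Type*} (v w : V) (A : Finset V) : w ∈ ins v A ↔ w = v ∨ w ∈ A := by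
  simp [ins]

/-- Rooted gadgets: in every valid matching the component of the root has at least `L`
left vertices; `C` bounds the expansion loss. -/
def Gad (k h d : ℕ) (α : ℝ) (L : ℕ) (C : ℝ) : Prop :=
  ∃ (U V : Type) (_ : Fintype U) (_ : Fintype V) (E : Finset (U × V)) (root : V),
    (∀ u, degL E u ≤ d) ∧
    (∀ S : Finset U, α * S.card ≤ ((nbhd E S).card : ℝ)) ∧
    (∀ S : Finset U, α * S.card ≤ ((ins root (nbhd E S)).card : ℝ) + C - 1) ∧
    (∀ F ⊆ E, (∀ c : (mkGraph F).ConnectedComponent, (componentEdges F c).card ≤ h * k) →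
      (∀ u, degL F u = h) →
      h * L ≤ (componentEdges F ((mkGraph F).connectedComponentMk (Sum.inr root))).card)

lemma Gad.weaken {k h d : ℕ} {α : ℝ} {L : ℕ} {C C' : ℝ} (hG : Gad k h d α L C)
    (hC : C ≤ C') : Gad k h d α L C' := by
  obtain ⟨U, V, i1, i2, E, root, h1, h2, h3, h4⟩ := hG
  exact ⟨U, V, i1, i2, E, root, h1, h2, fun S => by linarith [h3 S], h4⟩

lemma Gad.trivial (k h d : ℕ) (α : ℝ) : Gad k h d α 0 0 := by
  refine ⟨Empty, Unit, inferInstance, inferInstance, ∅, (), fun u => u.elim, ?_, ?_, ?_⟩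
  · intro S
    have : S = ∅ := Subsingleton.elim _ _
    subst this; simp
  · intro S
    have : S = ∅ := Subsingleton.elim _ _
    subst this; simp [nbhd, ins]
  · intros; simp

/-- Edge set of the combined gadget. -/
def combE {ι : Type} [Fintype ι] {U V : ι → Type} [∀ i, Fintype (U i)] [∀ i, Fintype (V i)]
    (E : ∀ i, Finset (U i × V i)) (root : ∀ i, V i) :
    Finset (Option (Σ i, U i) × (Σ i, V i)) :=
  Finset.univ.filter fun p =>
    (p.1 = none ∧ ∃ i, p.2 = ⟨i, root i⟩) ∨
    ∃ i u v, (u, v) ∈ E i ∧ p.1 = some ⟨i, u⟩ ∧ p.2 = ⟨i, v⟩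

section comb
variable {ι : Type} [Fintype ι] {U V : ι → Type} [∀ i, Fintype (U i)] [∀ i, Fintype (V i)]
    (E : ∀ i, Finset (U i × V i)) (root : ∀ i, V i)

lemma mem_combE_none (x : Σ i, V i) : (none, x) ∈ combE E root ↔ ∃ i, x = ⟨i, root i⟩ := by
  simp [combE]

lemma mem_combE_some (i : ι) (u : U i) (x : Σ i, V i) :
    (some ⟨i, u⟩, x) ∈ combE E root ↔ ∃ v, (u, v) ∈ E i ∧ x = ⟨i, v⟩ := by
  simp only [combE, Finset.mem_filter, Finset.mem_univ, true_and, reduceCtorEq, false_and,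
    false_or, Option.some.injEq]
  constructor
  · rintro ⟨j, u', v, h1, h2, h3⟩
    cases h2
    exact ⟨v, h1, h3⟩
  · rintro ⟨v, h1, h2⟩
    exact ⟨i, u, v, h1, rfl, h2⟩

lemma mem_combE_some' (i : ι) (u : U i) (v : V i) :
    (some ⟨i, u⟩, ⟨i, v⟩) ∈ combE E root ↔ (u, v) ∈ E i := by
  rw [mem_combE_some]
  constructor
  · rintro ⟨v', h1, h2⟩
    cases h2
    exact h1
  · intro hv
    exact ⟨v, hv, rfl⟩

/-- inclusion of left vertices -/
def lft (i : ι) (u : U i) : Option (Σ i, U i) := some ⟨i, u⟩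
/-- inclusion of right vertices -/
def rgt (i : ι) (v : V i) : Σ i, V i := ⟨i, v⟩

lemma lft_inj (i : ι) : Function.Injective (lft i : U i → Option (Σ i, U i)) := by
  intro a b hab
  simpa [lft] using hab

lemma rgt_inj (i : ι) : Function.Injective (rgt i : V i → Σ i, V i) := by
  intro a b hab
  simpa [rgt] using hab

lemma comb_degL (F : Finset (Option (Σ i, U i) × (Σ i, V i))) (hF : F ⊆ combE E root)
    (i : ι) (u : U i) : degL (pull (lft i) (rgt i) F) u = degL F (some ⟨i, u⟩) := by
  refine degL_pull (lft i) (rgt i) (lft_inj i) (rgt_inj i) F u ?_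
  intro v' hv'
  obtain ⟨v, _, rfl⟩ := (mem_combE_some E root i u v').1 (hF hv')
  exact ⟨v, rfl⟩

lemma pull_sub (F : Finset (Option (Σ i, U i) × (Σ i, V i))) (hF : F ⊆ combE E root)
    (i : ι) : pull (lft i) (rgt i) F ⊆ E i := by
  rintro ⟨u, v⟩ hp
  rw [mem_pull] at hp
  exact (mem_combE_some' E root i u v).1 (hF hp)

lemma pull_comb (i : ι) : pull (lft i) (rgt i) (combE E root) = E i := by
  ext ⟨u, v⟩
  rw [mem_pull]
  exact mem_combE_some' E root i u v

lemma comb_degL_none (F : Finset (Option (Σ i, U i) × (Σ i, V i))) (hF : F ⊆ combE E root) :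
    degL F none = (Finset.univ.filter fun i => ((none, ⟨i, root i⟩) :
      Option (Σ i, U i) × (Σ i, V i)) ∈ F).card := by
  symm
  unfold degL
  refine Finset.card_bij (fun i _ => (none, ⟨i, root i⟩)) ?_ ?_ ?_
  · intro i hi
    simpa using hi
  · intro i _ j _ hij
    simp only [Prod.mk.injEq, Sigma.mk.injEq, true_and] at hij
    exact hij.1
  · rintro ⟨a, b⟩ hp
    simp only [Finset.mem_filter] at hp
    obtain ⟨h1, rfl⟩ := hp
    obtain ⟨i, rfl⟩ := (mem_combE_none E root b).1 (hF h1)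
    exact ⟨i, by simpa using h1, rfl⟩

lemma comb_card_U (S : Finset (Option (Σ i, U i))) :
    S.card = (if none ∈ S then 1 else 0) +
      ∑ i, (Finset.univ.filter fun u : U i => lft i u ∈ S).card := by
  have h1 : (S.erase none).card = ∑ i, (Finset.univ.filter fun u : U i => lft i u ∈ S).card := by
    rw [← Finset.card_sigma]
    symm
    refine Finset.card_bij (fun x _ => some x) ?_ ?_ ?_
    · rintro ⟨i, u⟩ hx
      have hx' : lft i u ∈ S := by simpa using hx
      exact Finset.mem_erase.2 ⟨by simp, hx'⟩
    · intro a _ b _ hab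
      simpa using hab
    · rintro (_ | ⟨i, u⟩) hx
      · simp at hx
      · have hx' : lft i u ∈ S := (Finset.mem_erase.1 hx).2
        exact ⟨⟨i, u⟩, by simpa using hx', rfl⟩
  rw [← h1]
  split_ifs with h
  · rw [Finset.card_erase_of_mem h]
    have := Finset.card_pos.2 ⟨_, h⟩
    omega
  · rw [Finset.erase_eq_of_notMem h, zero_add]

lemma comb_card_V (A : Finset (Σ i, V i)) :
    A.card = ∑ i, (Finset.univ.filter fun v : V i => rgt i v ∈ A).card := by
  rw [← Finset.card_sigma]
  congr 1
  ext ⟨i, v⟩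
  simp only [Finset.mem_sigma, Finset.mem_filter, Finset.mem_univ, true_and]
  rfl

lemma comb_fiber (S : Finset (Option (Σ i, U i))) (i : ι) (v : V i) :
    rgt i v ∈ nbhd (combE E root) S ↔
      v ∈ nbhd (E i) (Finset.univ.filter fun u : U i => lft i u ∈ S) ∨
        (none ∈ S ∧ v = root i) := by
  rw [mem_nbhd, mem_nbhd]
  constructor
  · rintro ⟨_ | ⟨j, u⟩, hu, huv⟩
    · obtain ⟨j, hj⟩ := (mem_combE_none E root _).1 huv
      cases hj
      exact Or.inr ⟨hu, rfl⟩
    · obtain ⟨v', h1, h2⟩ := (mem_combE_some E root _ _ _).1 huv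
      cases h2
      have hu' : lft i u ∈ S := hu
      exact Or.inl ⟨u, by simpa using hu', h1⟩
  · rintro (⟨u, hu, huv⟩ | ⟨hn, rfl⟩)
    · have hu' : lft i u ∈ S := by simpa using hu
      exact ⟨some ⟨i, u⟩, hu', (mem_combE_some' E root i u v).2 huv⟩
    · exact ⟨none, hn, (mem_combE_none E root _).2 ⟨i, rfl⟩⟩

lemma comb_comp (F : Finset (Option (Σ i, U i) × (Σ i, V i))) (T : Finset ι) (m : ι → ℕ)
    (hT : ∀ i ∈ T, (none, ⟨i, root i⟩) ∈ F)
    (hm : ∀ i, m i ≤ (componentEdges (pull (lft i) (rgt i) F)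
      ((mkGraph (pull (lft i) (rgt i) F)).connectedComponentMk (Sum.inr (root i)))).card) :
    degL F none + ∑ i ∈ T, m i ≤
      (componentEdges F ((mkGraph F).connectedComponentMk (Sum.inl none))).card := by
  set c := (mkGraph F).connectedComponentMk (Sum.inl none) with hc
  rw [← Finset.card_filter_add_card_filter_not (s := componentEdges F c) (fun p => p.1 = none)]
  refine add_le_add ?_ ?_
  · unfold degL
    refine Finset.card_le_card ?_
    rintro ⟨a, b⟩ hp
    simp only [Finset.mem_filter, componentEdges] at hp ⊢
    obtain ⟨h1, rfl⟩ := hp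
    exact ⟨⟨h1, rfl⟩, rfl⟩
  · refine (Finset.sum_le_sum fun i _ => hm i).trans ?_
    rw [← Finset.card_sigma]
    refine Finset.card_le_card_of_injOn (fun x => (lft x.1 x.2.1, rgt x.1 x.2.2)) ?_ ?_
    · rintro ⟨i, u, v⟩ hx
      simp only [Finset.mem_coe, Finset.mem_sigma] at hx
      have h2 := comp_map (lft i) (rgt i) _ F (fun p hp => (mem_pull _ _ _ _).1 hp) _ _ hx.2
      have h3 : (mkGraph F).connectedComponentMk (Sum.map (lft i) (rgt i) (Sum.inr (root i)))
          = c := by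
        rw [hc, SimpleGraph.ConnectedComponent.eq]
        exact (mkGraph_adj F _ (hT i hx.1)).symm.reachable
      rw [h3] at h2
      simp only [Finset.coe_filter, Set.mem_ofPred_eq]
      exact ⟨h2, by simp [lft]⟩
    · rintro ⟨i, u, v⟩ _ ⟨j, u', v'⟩ _ hx
      simp only [lft, rgt, Prod.mk.injEq, Option.some.injEq] at hx
      obtain ⟨h1, h2⟩ := hx
      cases h1
      cases h2
      rfl

end comb

lemma Gad.combine {k h d : ℕ} {α : ℝ} (hh : 1 ≤ h) {ι : Type} [Fintype ι] (i₀ : ι)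
    (L : ι → ℕ) (C : ι → ℝ)
    (hG : ∀ i, Gad k h d α (L i) (C i)) (hd : Fintype.card ι ≤ d)
    (L' : ℕ) (C' : ℝ) (hC0 : C i₀ ≤ C') (hC1 : α + 1 + ∑ i, (C i - 1) ≤ C')
    (hC2 : α + ∑ i, (C i - 1) ≤ 0)
    (hT1 : ∀ T : Finset ι, T.card = h → i₀ ∈ T → L' ≤ 1 + ∑ i ∈ T, L i)
    (hT2 : ∀ T : Finset ι, T.card = h → i₀ ∉ T → k ≤ ∑ i ∈ T, L i) :
    Gad k h d α L' C' := by
  choose U V i1 i2 E root g1 g2 g3 g4 using hG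
  have key1 : ∀ S : Finset (Option (Σ i, U i)), none ∈ S →
      α * S.card ≤ ((nbhd (combE E root) S).card : ℝ) + (α + ∑ i, (C i - 1)) := by
    intro S hS
    rw [comb_card_U S, comb_card_V (nbhd (combE E root) S), if_pos hS]
    push_cast
    rw [mul_add, Finset.mul_sum]
    have : ∀ i, α * ((Finset.univ.filter fun u : U i => lft i u ∈ S).card : ℝ) ≤
        ((Finset.univ.filter fun v : V i => rgt i v ∈ nbhd (combE E root) S).card : ℝ)
          + (C i - 1) := by
      intro i
      refine (g3 i _).trans (le_of_eq ?_)
      rw [add_sub_assoc]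
      congr 3
      ext v
      simp only [mem_ins, Finset.mem_filter, Finset.mem_univ, true_and, comb_fiber, hS]
      tauto
    have h2 := Finset.sum_le_sum (fun i (_ : i ∈ Finset.univ) => this i)
    rw [Finset.sum_add_distrib] at h2
    linarith
  refine ⟨Option (Σ i, U i), Σ i, V i, inferInstance, inferInstance, combE E root,
    ⟨i₀, root i₀⟩, ?_, ?_, ?_, ?_⟩
  · rintro (_ | ⟨i, u⟩)
    · rw [comb_degL_none E root _ (Finset.Subset.refl _)]
      exact (Finset.card_le_univ _).trans hd
    · rw [← comb_degL E root _ (Finset.Subset.refl _), pull_comb]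
      exact g1 i u
  · intro S
    by_cases hS : none ∈ S
    · linarith [key1 S hS]
    · rw [comb_card_U S, comb_card_V (nbhd (combE E root) S), if_neg hS]
      push_cast
      rw [zero_add, Finset.mul_sum]
      refine Finset.sum_le_sum fun i _ => (g2 i _).trans (le_of_eq ?_)
      congr 2
      ext v
      simp only [Finset.mem_filter, Finset.mem_univ, true_and, comb_fiber, hS]
      tauto
  · intro S
    by_cases hS : none ∈ S
    · have h1 : (nbhd (combE E root) S).card ≤
          (ins (⟨i₀, root i₀⟩ : Σ i, V i) (nbhd (combE E root) S)).card :=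
        Finset.card_le_card fun x hx => (mem_ins _ _ _).2 (Or.inr hx)
      have h2 : ((nbhd (combE E root) S).card : ℝ) ≤
          ((ins (⟨i₀, root i₀⟩ : Σ i, V i) (nbhd (combE E root) S)).card : ℝ) := by
        exact_mod_cast h1
      linarith [key1 S hS]
    · rw [comb_card_U S, comb_card_V (ins _ (nbhd (combE E root) S)), if_neg hS]
      push_cast
      rw [zero_add, Finset.mul_sum]
      rw [← Finset.add_sum_erase _ _ (Finset.mem_univ i₀),
        ← Finset.add_sum_erase (a := i₀) _ (fun i => ((Finset.univ.filter fun v : V i =>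
          rgt i v ∈ ins (⟨i₀, root i₀⟩ : Σ i, V i) (nbhd (combE E root) S)).card : ℝ))
          (Finset.mem_univ i₀)]
      have h1 : ∑ i ∈ Finset.univ.erase i₀,
          α * ((Finset.univ.filter fun u : U i => lft i u ∈ S).card : ℝ) ≤
          ∑ i ∈ Finset.univ.erase i₀, ((Finset.univ.filter fun v : V i =>
          rgt i v ∈ ins (⟨i₀, root i₀⟩ : Σ i, V i) (nbhd (combE E root) S)).card : ℝ) := by
        refine Finset.sum_le_sum fun i _ => (g2 i _).trans ?_
        norm_cast
        refine Finset.card_le_card fun v hv => ?_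
        simp only [Finset.mem_filter, Finset.mem_univ, true_and, mem_ins, comb_fiber]
        exact Or.inr (Or.inl hv)
      have h2 := g3 i₀ (Finset.univ.filter fun u : U i₀ => lft i₀ u ∈ S)
      have h3 : ins (root i₀) (nbhd (E i₀)
          (Finset.univ.filter fun u : U i₀ => lft i₀ u ∈ S)) ⊆ (Finset.univ.filter fun v : V i₀ =>
          rgt i₀ v ∈ ins (⟨i₀, root i₀⟩ : Σ i, V i) (nbhd (combE E root) S)) := by
        intro v hv
        simp only [Finset.mem_filter, Finset.mem_univ, true_and, mem_ins, comb_fiber]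
        rcases (mem_ins _ _ _).1 hv with rfl | hv
        · exact Or.inl rfl
        · exact Or.inr (Or.inl hv)
      have h4 : ((ins (root i₀) (nbhd (E i₀)
          (Finset.univ.filter fun u : U i₀ => lft i₀ u ∈ S))).card : ℝ) ≤
          ((Finset.univ.filter fun v : V i₀ =>
          rgt i₀ v ∈ ins (⟨i₀, root i₀⟩ : Σ i, V i) (nbhd (combE E root) S)).card : ℝ) := by
        exact_mod_cast Finset.card_le_card h3
      linarith
  · intro F hF hcomp hdeg
    set T := Finset.univ.filter fun i => ((none, ⟨i, root i⟩) :
      Option (Σ i, U i) × (Σ i, V i)) ∈ F with hTdef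
    have hT : T.card = h := by rw [← hdeg none, comb_degL_none E root F hF]
    have hm : ∀ i, h * L i ≤ (componentEdges (pull (lft i) (rgt i) F)
        ((mkGraph (pull (lft i) (rgt i) F)).connectedComponentMk (Sum.inr (root i)))).card := by
      intro i
      refine g4 i _ (pull_sub E root F hF i) ?_ ?_
      · intro c
        induction c using SimpleGraph.ConnectedComponent.ind with
        | _ x =>
          exact (comp_card (lft i) (rgt i) (lft_inj i) (rgt_inj i) _ F
            (fun p hp => (mem_pull _ _ _ _).1 hp) x).trans (hcomp _)
      · intro u
        rw [comb_degL E root F hF]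
        exact hdeg _
    have hTm : ∀ i ∈ T, ((none, ⟨i, root i⟩) : Option (Σ i, U i) × (Σ i, V i)) ∈ F := by
      intro i hi
      simpa [hTdef] using hi
    have hmain := comb_comp root F T (fun i => h * L i) hTm hm
    rw [hdeg none, ← Finset.mul_sum] at hmain
    by_cases h0 : i₀ ∈ T
    · have h5 : (mkGraph F).connectedComponentMk (Sum.inr ⟨i₀, root i₀⟩) =
          (mkGraph F).connectedComponentMk (Sum.inl none) := by
        rw [SimpleGraph.ConnectedComponent.eq]
        exact (mkGraph_adj F _ (hTm i₀ h0)).symm.reachable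
      rw [h5]
      have := Nat.mul_le_mul_left h (hT1 T hT h0)
      rw [mul_add, mul_one] at this
      omega
    · exfalso
      have := Nat.mul_le_mul_left h (hT2 T hT h0)
      have := hcomp ((mkGraph F).connectedComponentMk (Sum.inl none))
      omega

lemma exists_parts (c : ℕ) : ∀ n M : ℕ, M ≤ n * c →
    ∃ s : Fin n → ℕ, (∀ i, s i ≤ c) ∧ ∑ i, s i = M := by
  intro n
  induction n with
  | zero => intro M hM; exact ⟨fun _ => 0, by simp, by simp at hM ⊢; omega⟩
  | succ n ih =>
    intro M hM
    rw [Nat.succ_mul] at hM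
    obtain ⟨s, hs, hs2⟩ := ih (M - min M c) (by omega)
    refine ⟨Fin.cons (min M c) s, ?_, ?_⟩
    · intro i
      refine Fin.cases ?_ ?_ i
      · simp
      · intro j; simpa using hs j
    · rw [Fin.sum_univ_succ]
      simp [hs2]

lemma Gad.forced_step {k h d : ℕ} {b : ℝ} (hb : 0 ≤ b) (hh : 2 ≤ h) (hd : h < d) {l : ℕ} {C : ℝ}
    (hG : Gad k h d ((h : ℝ) - 1 + b) l C) (hC : C + b ≤ 1) :
    Gad k h d ((h : ℝ) - 1 + b) (l + 1) (C + b) := by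
  have hcast : ((h - 1 : ℕ) : ℝ) = (h : ℝ) - 1 := by
    rw [Nat.cast_sub (by omega)]; simp
  have hsum : ∑ i : Option (Fin (h - 1)), ((i.elim C fun _ => (0 : ℝ)) - 1) =
      C - 1 - ((h : ℝ) - 1) := by
    rw [Fintype.sum_option]
    simp [hcast]
  refine Gad.combine (ι := Option (Fin (h - 1))) (by omega) none
    (fun i => i.elim l fun _ => 0) (fun i => i.elim C fun _ => 0) ?_ ?_ _ _ ?_ ?_ ?_ ?_ ?_
  · rintro (_ | i)
    · exact hG
    · exact Gad.trivial _ _ _ _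
  · simp; omega
  · simp [hb]
  · rw [hsum]; linarith
  · rw [hsum]; linarith
  · intro T hT h0
    have := Finset.single_le_sum (f := fun i : Option (Fin (h - 1)) => i.elim l fun _ => 0)
      (fun _ _ => Nat.zero_le _) h0
    simp only [Option.elim] at this ⊢
    omega
  · intro T hT h0
    exfalso
    have : T.card < Fintype.card (Option (Fin (h - 1))) := by
      rw [← Finset.card_univ]
      exact Finset.card_lt_card (Finset.ssubset_univ_iff.2 fun h1 => h0 (h1 ▸ Finset.mem_univ _))
    simp at this
    omega

lemma Gad.forced {k h d : ℕ} {b : ℝ} (hb : 0 ≤ b) (hh : 2 ≤ h) (hd : h < d) (c : ℕ)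
    (hc : b * c ≤ 1) : ∀ l ≤ c, Gad k h d ((h : ℝ) - 1 + b) l (b * l) := by
  intro l
  induction l with
  | zero => intro _; simpa using Gad.trivial k h d _
  | succ l ih =>
    intro hl
    have h1 : b * ((l : ℝ) + 1) ≤ b * c := by
      refine mul_le_mul_of_nonneg_left ?_ hb
      exact_mod_cast hl
    have := Gad.forced_step hb hh hd (ih (by omega)) (by linarith)
    push_cast
    rw [mul_add, mul_one]
    exact this

lemma Gad.step {k h d : ℕ} {b : ℝ} (hb : 0 ≤ b) (hh : 2 ≤ h) (hd : h < d) (c : ℕ)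
    (hc : b * c ≤ 1) {L0 B M : ℕ} {C0 Cb : ℝ}
    (hG0 : Gad k h d ((h : ℝ) - 1 + b) L0 C0) (hGB : Gad k h d ((h : ℝ) - 1 + b) B Cb)
    (hM : M ≤ (h - 1) * c) (hcB : c ≤ B) (hk : k ≤ M + B) (C' : ℝ)
    (hC0 : C0 ≤ C') (hC1 : C0 + b * (1 + M) + ((d : ℝ) - h) * (Cb - 1) ≤ C')
    (hC2 : C0 + b * (1 + M) + ((d : ℝ) - h) * (Cb - 1) ≤ 1) :
    Gad k h d ((h : ℝ) - 1 + b) (L0 + 1 + M) C' := by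
  obtain ⟨s, hs, hsM⟩ := exists_parts c (h - 1) M hM
  have hcast : ((h - 1 : ℕ) : ℝ) = (h : ℝ) - 1 := by
    rw [Nat.cast_sub (by omega)]; simp
  have hcast2 : ((d - h : ℕ) : ℝ) = (d : ℝ) - h := by
    rw [Nat.cast_sub (by omega)]
  have hsM' : ∑ i, (s i : ℝ) = M := by exact_mod_cast hsM
  let L : Option (Fin (d - h) ⊕ Fin (h - 1)) → ℕ := fun i => i.elim L0 (Sum.elim (fun _ => B) s)
  let C : Option (Fin (d - h) ⊕ Fin (h - 1)) → ℝ :=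
    fun i => i.elim C0 (Sum.elim (fun _ => Cb) (fun j => b * s j))
  have hsum : ∑ i, (C i - 1) =
      C0 - 1 + ((d : ℝ) - h) * (Cb - 1) + (b * M - ((h : ℝ) - 1)) := by
    rw [Fintype.sum_option, Fintype.sum_sum_type]
    simp [C, hcast, hcast2, Finset.sum_sub_distrib, ← Finset.mul_sum, hsM']
    ring
  have hLsum : ∑ i, L i = L0 + ((d - h) * B + M) := by
    rw [Fintype.sum_option, Fintype.sum_sum_type]
    simp [L, hsM]
  have hLB : ∀ i, i ≠ none → L i ≤ B := by
    rintro (_ | i | i) hi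
    · exact absurd rfl hi
    · exact le_refl _
    · exact (hs i).trans hcB
  have hcard : Fintype.card (Option (Fin (d - h) ⊕ Fin (h - 1))) = d := by
    simp; omega
  refine Gad.combine (by omega) none L C ?_ hcard.le _ _ ?_ ?_ ?_ ?_ ?_
  · rintro (_ | i | i)
    · exact hG0
    · exact hGB
    · exact Gad.forced hb hh hd c hc _ (hs i)
  · exact hC0
  · rw [hsum]; linarith
  · rw [hsum]; linarith
  · intro T hT h0
    have h1 := Finset.sum_add_sum_compl T L
    have h2 : ∑ i ∈ Tᶜ, L i ≤ Tᶜ.card * B := by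
      rw [← smul_eq_mul]
      refine Finset.sum_le_card_nsmul _ _ _ fun i hi => hLB i ?_
      rintro rfl
      exact (Finset.mem_compl.1 hi) h0
    rw [Finset.card_compl, hcard, hT] at h2
    omega
  · intro T hT h0
    have h1 := Finset.sum_add_sum_compl T L
    have h3 : none ∈ Tᶜ := Finset.mem_compl.2 h0
    rw [← Finset.add_sum_erase _ _ h3] at h1
    have h2 : ∑ i ∈ Tᶜ.erase none, L i ≤ (Tᶜ.erase none).card * B := by
      rw [← smul_eq_mul]
      refine Finset.sum_le_card_nsmul _ _ _ fun i hi => hLB i ?_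
      exact (Finset.mem_erase.1 hi).1
    rw [Finset.card_erase_of_mem h3, Finset.card_compl, hcard, hT] at h2
    have h4 : L none = L0 := rfl
    obtain ⟨e, he⟩ : ∃ e, d - h = e + 1 := ⟨d - h - 1, by omega⟩
    have he2 : (d - h) * B = e * B + B := by rw [he, add_mul, one_mul]
    have he3 : (d - h - 1) * B = e * B := by rw [he, Nat.add_sub_cancel]
    omega

lemma Gad.main {k h d : ℕ} {b : ℝ} (hb : 0 ≤ b) (hh : 2 ≤ h) (hd : h < d) (c : ℕ)
    (hc1 : 1 ≤ c) (hck : 2 * c ≤ k + 1) (hkc : k ≤ h * c)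
    (hc : b * c ≤ 1)
    (hlt : b * ((k : ℝ) + 1 + ((d : ℝ) - h - 1) * c) < (d : ℝ) - h + 1) :
    ∃ C, Gad k h d ((h : ℝ) - 1 + b) (k + 1) C := by
  have hR : (1 : ℝ) ≤ (d : ℝ) - h := by
    have : (h : ℝ) + 1 ≤ d := by exact_mod_cast hd
    linarith
  set R : ℝ := (d : ℝ) - h with hRdef
  obtain ⟨g, rfl⟩ : ∃ g, h = g + 1 := ⟨h - 1, by omega⟩
  have hM1 : k - c ≤ (g + 1 - 1) * c := by
    rw [add_mul, one_mul] at hkc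
    rw [Nat.add_sub_cancel]
    omega
  have hM2 : c - 1 ≤ (g + 1 - 1) * c := by
    rw [Nat.add_sub_cancel]
    have : 1 * c ≤ g * c := Nat.mul_le_mul_right _ (by omega)
    omega
  have hcast1 : ((k - c : ℕ) : ℝ) = (k : ℝ) - c := by rw [Nat.cast_sub (by omega)]
  have hcast2 : ((c - 1 : ℕ) : ℝ) = (c : ℝ) - 1 := by rw [Nat.cast_sub (by omega)]; simp
  set q0 : ℝ := b * (1 + ((k : ℝ) - c)) + R * (b * c - 1) with hq0
  have hq1 : q0 < 1 := by rw [hq0]; nlinarith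
  set δ : ℝ := R * (1 - q0) with hδ
  have hδ0 : 0 < δ := mul_pos (by linarith) (by linarith)
  have hbc : 0 ≤ b * c := by positivity
  have loop : ∀ n : ℕ, Gad k (g + 1) d (((g + 1 : ℕ) : ℝ) - 1 + b) c (max 0 (b * c - n * δ)) := by
    intro n
    induction n with
    | zero =>
      refine (Gad.forced hb hh hd c hc c le_rfl).weaken ?_
      simp
    | succ n ih =>
      set p : ℝ := max 0 (b * c - n * δ) with hp
      have hpb : p ≤ b * c := by
        refine max_le hbc ?_
        have : 0 ≤ (n : ℝ) * δ := by positivity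
        linarith
      set q : ℝ := max 0 (b * (1 + ((k : ℝ) - c)) + R * (p - 1)) with hq
      have hq2 : b * (1 + ((k : ℝ) - c)) + R * (p - 1) ≤ q0 := by
        rw [hq0]
        have := mul_le_mul_of_nonneg_left hpb (by linarith : 0 ≤ R)
        linarith
      have hQ : Gad k (g + 1) d (((g + 1 : ℕ) : ℝ) - 1 + b) (0 + 1 + (k - c)) q := by
        refine Gad.step hb hh hd c hc (Gad.trivial _ _ _ _) ih hM1 le_rfl (by omega) _
          (le_max_left _ _) ?_ ?_
        · rw [hcast1, ← hRdef, zero_add]; exact le_max_right _ _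
        · rw [hcast1, ← hRdef, zero_add]; linarith
      have hq3 : q ≤ 1 := max_le (by norm_num) (by linarith)
      have hqq : b * (1 + ((c : ℝ) - 1)) + R * (q - 1) ≤ max 0 (b * c - (n + 1 : ℕ) * δ) := by
        rcases le_total (b * (1 + ((k : ℝ) - c)) + R * (p - 1)) 0 with h1 | h1
        · rw [max_eq_left h1] at hq
          rw [hq]
          refine le_trans ?_ (le_max_left _ _)
          linarith
        · rw [max_eq_right h1] at hq
          have e1 : q - 1 = (q0 - 1) - R * (b * c - p) := by rw [hq, hq0]; ring
          have e2 : b * (1 + ((c : ℝ) - 1)) + R * (q - 1) = b * c - δ - R * R * (b * c - p) := by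
            rw [e1, hδ]; ring
          have e3 : b * c - p ≤ R * R * (b * c - p) := by
            have : 1 ≤ R * R := by nlinarith
            nlinarith
          rw [e2]
          push_cast
          rcases le_total (b * c - n * δ) 0 with h2 | h2
          · rw [max_eq_left h2] at hp
            refine le_trans ?_ (le_max_left _ _)
            rw [hp] at e3 ⊢
            linarith
          · rw [max_eq_right h2] at hp
            refine le_trans ?_ (le_max_right _ _)
            linarith
      have hP : Gad k (g + 1) d (((g + 1 : ℕ) : ℝ) - 1 + b) (0 + 1 + (c - 1))
          (max 0 (b * c - (n + 1 : ℕ) * δ)) := by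
        refine Gad.step hb hh hd c hc (Gad.trivial _ _ _ _) hQ hM2 (by omega) (by omega) _
          (le_max_left _ _) ?_ ?_
        · rw [hcast2, ← hRdef, zero_add]; exact hqq
        · rw [hcast2, ← hRdef, zero_add]
          have : R * (q - 1) ≤ 0 := mul_nonpos_of_nonneg_of_nonpos (by linarith) (by linarith)
          linarith
      have : 0 + 1 + (c - 1) = c := by omega
      rwa [this] at hP
  obtain ⟨n, hn⟩ := exists_nat_ge (b * c / δ)
  have hP0 : Gad k (g + 1) d (((g + 1 : ℕ) : ℝ) - 1 + b) c 0 := by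
    refine (loop n).weaken (max_le le_rfl ?_)
    rw [div_le_iff₀ hδ0] at hn
    linarith
  refine ⟨max 0 q0, ?_⟩
  have := Gad.step hb hh hd c hc hP0 (Gad.forced hb hh hd c hc c le_rfl) hM1 le_rfl (by omega)
    (max 0 q0) (le_max_left _ _)
    (by rw [hcast1, ← hRdef, zero_add]; exact le_max_right _ _)
    (by rw [hcast1, ← hRdef, zero_add]; exact hq1.le)
  have e : c + 1 + (k - c) = k + 1 := by omega
  rwa [e] at this

lemma Gad.finish {k h d : ℕ} {α C : ℝ} (hh : 2 ≤ h) (hG : Gad k h d α (k + 1) C) :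
    ∃ (m n : ℕ) (E : Finset (Fin m × Fin n)),
      (∀ u : Fin m, degL E u ≤ d) ∧
      (∀ S : Finset (Fin m), α * S.card ≤ ((nbhd E S).card : ℝ)) ∧
      ¬ ∃ F : Finset (Fin m × Fin n), IsSTMatching h (h * k) E F := by
  obtain ⟨U, V, i1, i2, E, root, h1, h2, _, h4⟩ := hG
  let e := Fintype.equivFin U
  let f := Fintype.equivFin V
  refine ⟨Fintype.card U, Fintype.card V, pull e.symm f.symm E, ?_, ?_, ?_⟩
  · intro u
    rw [degL_pull e.symm f.symm e.symm.injective f.symm.injective]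
    · exact h1 _
    · intro v' _
      exact ⟨f v', by simp⟩
  · intro S
    have h5 := h2 (S.map e.symm.toEmbedding)
    rw [Finset.card_map] at h5
    refine h5.trans (le_of_eq ?_)
    rw [← Finset.card_map f.toEmbedding]
    congr 2
    ext v
    simp only [Finset.mem_map_equiv, mem_nbhd, mem_pull]
    constructor
    · rintro ⟨u, hu, huv⟩
      exact ⟨e u, by simpa using hu, by simpa using huv⟩
    · rintro ⟨u, hu, huv⟩
      exact ⟨e.symm u, by simpa using hu, by simpa using huv⟩
  · rintro ⟨F, hF, _, hcomp, hdeg⟩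
    have hcomp' : ∀ c : (mkGraph (pull e f F)).ConnectedComponent,
        (componentEdges (pull e f F) c).card ≤ h * k := by
      intro c
      induction c using SimpleGraph.ConnectedComponent.ind with
      | _ x =>
        exact (comp_card e f e.injective f.injective _ F
          (fun p hp => (mem_pull _ _ _ _).1 hp) x).trans (hcomp _)
    have h6 := h4 (pull e f F) ?_ hcomp' ?_
    · have := hcomp' ((mkGraph (pull e f F)).connectedComponentMk (Sum.inr root))
      rw [mul_add, mul_one] at h6
      omega
    · rintro ⟨u, v⟩ hp
      rw [mem_pull] at hp
      have := hF hp
      rw [mem_pull] at this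
      simpa using this
    · intro u
      rw [degL_pull e f e.injective f.injective]
      · exact hdeg _
      · intro v' _
        exact ⟨f.symm v', by simp⟩

/-- **Proposition 4 (optimality).** Let `k ≥ 2`, `d > h ≥ 2` and
`α < h − 1 + (d − h + 1)/(k + 1 + (d − h − 1)·⌈k/h⌉)`. Then there is a bipartite
graph `G` with maximum left degree at most `d` satisfying the `α`-neighbourhood
condition which contains no `(h, hk)`-matching. -/
theorem stmt_3 (k h d : ℕ) (hk : 2 ≤ k) (hh : 2 ≤ h) (hd : h < d) (α : ℝ)
    (hα : α < (h : ℝ) - 1 +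
        ((d : ℝ) - h + 1) /
          ((k : ℝ) + 1 + ((d : ℝ) - h - 1) * (Nat.ceil ((k : ℝ) / (h : ℝ)) : ℝ))) :
    ∃ (m n : ℕ) (E : Finset (Fin m × Fin n)),
      (∀ u : Fin m, degL E u ≤ d) ∧
      (∀ S : Finset (Fin m), α * S.card ≤ ((nbhd E S).card : ℝ)) ∧
      ¬ ∃ F : Finset (Fin m × Fin n), IsSTMatching h (h * k) E F := by
  set c : ℕ := Nat.ceil ((k : ℝ) / (h : ℝ)) with hcdef
  have hh0 : (0 : ℝ) < h := by exact_mod_cast (by omega : 0 < h)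
  have hk0 : (0 : ℝ) < k := by exact_mod_cast (by omega : 0 < k)
  have hc1 : 1 ≤ c := Nat.ceil_pos.2 (div_pos hk0 hh0)
  have hkc : k ≤ h * c := by
    have h1 := Nat.le_ceil ((k : ℝ) / (h : ℝ))
    rw [← hcdef, div_le_iff₀ hh0] at h1
    have h2 : (k : ℝ) ≤ ((h * c : ℕ) : ℝ) := by push_cast; linarith
    exact_mod_cast h2
  have hck : 2 * c ≤ k + 1 := by
    have h1 := Nat.ceil_lt_add_one (div_pos hk0 hh0).le
    rw [← hcdef, ← sub_lt_iff_lt_add, lt_div_iff₀ hh0] at h1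
    have h2 : ((c : ℝ) - 1) * 2 ≤ ((c : ℝ) - 1) * h := by
      refine mul_le_mul_of_nonneg_left (by exact_mod_cast hh) ?_
      have : (1 : ℝ) ≤ c := by exact_mod_cast hc1
      linarith
    have h3 : ((2 * c : ℕ) : ℝ) < ((k + 2 : ℕ) : ℝ) := by push_cast; linarith
    have h4 : 2 * c < k + 2 := by exact_mod_cast h3
    omega
  have hR : (h : ℝ) + 1 ≤ d := by exact_mod_cast hd
  have hcr : (1 : ℝ) ≤ c := by exact_mod_cast hc1
  have hckr : 2 * (c : ℝ) ≤ k + 1 := by exact_mod_cast hck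
  set D : ℝ := (k : ℝ) + 1 + ((d : ℝ) - h - 1) * (c : ℝ) with hD
  have hD0 : 0 < D := by
    have : 0 ≤ ((d : ℝ) - h - 1) * (c : ℝ) := mul_nonneg (by linarith) (by linarith)
    linarith
  have hDc : ((d : ℝ) - h + 1) * c ≤ D := by rw [hD]; nlinarith
  set b : ℝ := max 0 (α - ((h : ℝ) - 1)) with hbdef
  have hb : 0 ≤ b := le_max_left _ _
  have hblt : b < ((d : ℝ) - h + 1) / D :=
    max_lt (div_pos (by linarith) hD0) (by linarith)
  have hlt : b * D < (d : ℝ) - h + 1 := (lt_div_iff₀ hD0).1 hblt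
  have hbc : b * c ≤ 1 := by
    have h1 := mul_le_mul_of_nonneg_left hDc hb
    have h2 : (b * c) * ((d : ℝ) - h + 1) ≤ 1 * ((d : ℝ) - h + 1) := by linarith
    exact le_of_mul_le_mul_right h2 (by linarith)
  obtain ⟨C, hG⟩ := Gad.main hb hh hd c hc1 hck hkc hbc hlt
  obtain ⟨m, n, E, h1, h2, h3⟩ := Gad.finish hh hG
  refine ⟨m, n, E, h1, fun S => le_trans ?_ (h2 S), h3⟩
  refine mul_le_mul_of_nonneg_right ?_ (Nat.cast_nonneg _)
  have := le_max_right 0 (α - ((h : ℝ) - 1))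
  linarith
end
end
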